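/- Let $a, b, c$ be integers with $\gcd(b, c) = 1$, both $b$ and $c$ odd, and $2b^5 - c^5 = a^2$. Then $b = c = 1$ (and hence $a = \pm 1$). -/

import Mathlib

/-!
Let `K = ℚ(θ)` with `θ ^ 5 = 2`. Then `2b⁵ - c⁵ = (θb - c)(θ⁴b⁴ + θ³b³c + θ²b²c² + θbc³ + c⁴)`, and
the two factors share no prime outside `5`. As `𝓞 K` is a principal ideal domain of unit rank `2`,
modulo squares `θb - c` is a product of the units `θ - 1`, `θ³ + θ² - 1`, `-1` and the prime
`1 + θ²` above `5`. At the prime above `2` these four have distinct quadratic defects `1, 3, 5, 10`,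
so an element of the group they generate is a square as soon as it is a square modulo `θ¹¹`. Since
`(b, c)` is `(3, 5)` or `(1, 1)` modulo `(4, 8)`, this forces `(b, c) ≡ (1, 1)` and makes
`(θ - 1)(θb - c)` a square. Hence `t = θb / c` is the abscissa of a `K`-point of the genus one curve
`V² = (θ - 1)(t⁴ + t³ + t² + t + 1)`, and this point is `2`-adically close to the known point with
`t = θ` or to the known point with `t = -θ / 3`.

The two nearby points differ by a `K`-point close to the origin of the Jacobian
`y² = x(x² - 5(θ - 1)x + 5(θ - 1)²)`. For such points the same `2`-adic criterion, applied on this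
curve and on its `2`-isogenous curve, shows that they are divisible by `2`, and halving lowers the
pole order of `x` by `10`. When the pole order reaches `2`, the criterion makes `-(θ³ + θ² - 1)x` a
square, which is impossible because `x` is positive at the real place. So the two points coincide,
that is `b = c` or `c = -3b`, and the second case would make `245` or `-245` a square.
-/

open NumberField Module Polynomial

section PureExtension

variable {F E : Type*} [Field F] [Field E] [Algebra F E] {p : ℕ} {a : E} {n : F}

theorem minpoly_eq_X_pow_sub_C (hp : p.Prime) (ha : a ^ p = algebraMap F E n)
    (hn : ∀ b : F, b ^ p ≠ n) : minpoly F a = X ^ p - C n :=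
  (minpoly.eq_of_irreducible_of_monic (X_pow_sub_C_irreducible_of_prime hp hn) (by simp [ha])
    (monic_X_pow_sub_C n hp.ne_zero)).symm

theorem charpoly_lmul_eq_X_pow_sub_C (hp : p.Prime) (hE : finrank F E = p)
    (ha : a ^ p = algebraMap F E n) (hn : ∀ b : F, b ^ p ≠ n) :
    haveI := Module.finite_of_finrank_pos (hE ▸ hp.pos)
    (Algebra.lmul F E a).charpoly = X ^ p - C n := by
  have := Module.finite_of_finrank_pos (hE ▸ hp.pos)
  refine eq_of_monic_of_dvd_of_natDegree_le (monic_X_pow_sub_C n hp.ne_zero)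
    (LinearMap.charpoly_monic _) ?_ ?_
  · rw [← minpoly_eq_X_pow_sub_C hp ha hn]
    exact minpoly.dvd F a (Algebra.aeval_self_charpoly_lmul a)
  · rw [LinearMap.charpoly_natDegree, hE, natDegree_X_pow_sub_C]

theorem norm_algebraMap_sub (hp : p.Prime) (hE : finrank F E = p)
    (ha : a ^ p = algebraMap F E n) (hn : ∀ b : F, b ^ p ≠ n) (r : F) :
    Algebra.norm F (algebraMap F E r - a) = r ^ p - n := by
  have := Module.finite_of_finrank_pos (hE ▸ hp.pos)
  calc Algebra.norm F (algebraMap F E r - a)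
      = LinearMap.det (algebraMap F (Module.End F E) r - Algebra.lmul F E a) := by
        rw [Algebra.norm_apply, map_sub]
        congr 2
        ext
        simp [Algebra.smul_def]
    _ = (Algebra.lmul F E a).charpoly.eval r := (LinearMap.eval_charpoly _ r).symm
    _ = r ^ p - n := by rw [charpoly_lmul_eq_X_pow_sub_C hp hE ha hn]; simp

theorem norm_eq_of_pow_eq (hp : p.Prime) (hodd : Odd p) (hE : finrank F E = p)
    (ha : a ^ p = algebraMap F E n) (hn : ∀ b : F, b ^ p ≠ n) : Algebra.norm F a = n := by
  have h := norm_algebraMap_sub hp hE (a := -a) (n := -n) (by rw [hodd.neg_pow, ha, map_neg])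
    (fun b hb => hn (-b) (by rw [hodd.neg_pow, hb, neg_neg])) 0
  simpa [hp.ne_zero] using h

theorem adjoin_simple_eq_top_of_pow_eq (hp : p.Prime) (hE : finrank F E = p)
    (ha : a ^ p = algebraMap F E n) (hn : ∀ b : F, b ^ p ≠ n) :
    IntermediateField.adjoin F {a} = ⊤ := by
  have := Module.finite_of_finrank_pos (hE ▸ hp.pos)
  rw [Field.primitive_element_iff_minpoly_natDegree_eq, minpoly_eq_X_pow_sub_C hp ha hn,
    natDegree_X_pow_sub_C, hE]

theorem discr_pow_of_pow_eq [CharZero F] (hp : p.Prime) (hodd : Odd p) (hE : finrank F E = p)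
    (ha : a ^ p = algebraMap F E n) (hn : ∀ b : F, b ^ p ≠ n) :
    Algebra.discr F (fun i : Fin p => a ^ (i : ℕ)) =
      (-1) ^ (p * (p - 1) / 2) * (p ^ p * n ^ (p - 1)) := by
  have := Module.finite_of_finrank_pos (hE ▸ hp.pos)
  have hint : IsIntegral F a := Algebra.IsIntegral.isIntegral a
  have htop : Algebra.adjoin F {a} = ⊤ := by
    rw [← IntermediateField.adjoin_simple_toSubalgebra_of_isAlgebraic hint.isAlgebraic,
      adjoin_simple_eq_top_of_pow_eq hp hE ha hn, IntermediateField.top_toSubalgebra]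
  let pb := PowerBasis.ofAdjoinEqTop hint htop
  have hgen : pb.gen = a := PowerBasis.ofAdjoinEqTop_gen hint htop
  have hdim : pb.dim = p := by rw [← pb.finrank, hE]
  have hbasis : Algebra.discr F (fun i : Fin p => a ^ (i : ℕ)) = Algebra.discr F pb.basis := by
    rw [← Algebra.discr_reindex F pb.basis (finCongr hdim.symm).symm]
    congr 1
    ext i
    simp [hgen]
  rw [hbasis, Algebra.discr_powerBasis_eq_norm, hgen, hE, minpoly_eq_X_pow_sub_C hp ha hn]
  have hderiv : aeval a (derivative (X ^ p - C n)) = algebraMap F E p * a ^ (p - 1) := by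
    simp [derivative_X_pow]
  rw [hderiv, map_mul, map_pow, Algebra.norm_algebraMap, hE, norm_eq_of_pow_eq hp hodd hE ha hn]

end PureExtension

section Discriminant

variable {A B ι : Type*} [CommRing A] [CommRing B] [Algebra A B] [Fintype ι] [DecidableEq ι]

theorem discr_basis_dvd_discr (b : Basis ι A B) (v : ι → B) :
    Algebra.discr A b ∣ Algebra.discr A v := by
  have hv : Matrix.vecMul b ((b.toMatrix v).map (algebraMap A B)) = v := by
    ext i
    conv_rhs => rw [← b.sum_repr (v i)]
    simp [Matrix.vecMul, dotProduct, Basis.toMatrix_apply, Algebra.smul_def, mul_comm]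
  rw [← hv, Algebra.discr_of_matrix_vecMul]
  exact dvd_mul_left _ _

end Discriminant

section NumberField

variable {K : Type*} [Field K] [NumberField K]

theorem coe_discr_int {ι : Type*} [Fintype ι] [DecidableEq ι] (v : ι → 𝓞 K) :
    (Algebra.discr ℤ v : ℚ) = Algebra.discr ℚ (fun i => (v i : K)) := by
  rw [Algebra.discr_def, Algebra.discr_def, ← eq_intCast (algebraMap ℤ ℚ), RingHom.map_det]
  congr 1
  ext i j
  simpa [Algebra.traceMatrix_apply, Algebra.traceForm_apply] using
    Algebra.coe_trace_int (v i * v j)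

theorem discr_dvd_discr_of_card_eq {ι : Type*} [Fintype ι] [DecidableEq ι]
    (hι : Fintype.card ι = finrank ℚ K) (v : ι → 𝓞 K) : discr K ∣ Algebra.discr ℤ v := by
  let e : Free.ChooseBasisIndex ℤ (𝓞 K) ≃ ι := Fintype.equivOfCardEq (by
    rw [hι, ← RingOfIntegers.rank, finrank_eq_card_chooseBasisIndex])
  rw [NumberField.discr, ← Algebra.discr_reindex ℤ (RingOfIntegers.basis K) e,
    ← Basis.coe_reindex]
  exact discr_basis_dvd_discr _ v

theorem ratCast_pow_ne_of_lt_of_lt {p : ℕ} (hodd : Odd p) {n k : ℤ} (h₁ : k ^ p < n)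
    (h₂ : n < (k + 1) ^ p) (b : ℚ) : b ^ p ≠ n := by
  intro h
  have hb : IsIntegral ℤ b := IsIntegral.of_pow hodd.pos (h ▸ isIntegral_algebraMap)
  obtain ⟨m, rfl⟩ := IsIntegrallyClosed.isIntegral_iff.mp hb
  have hm : m ^ p = n := by
    simp only [algebraMap_int_eq, eq_intCast] at h
    exact_mod_cast h
  have hkm : k < m := hodd.strictMono_pow.lt_iff_lt.mp (hm ▸ h₁)
  have hmk : m < k + 1 := hodd.strictMono_pow.lt_iff_lt.mp (hm ▸ h₂)
  lia

variable {p : ℕ} {α : 𝓞 K} {n : ℤ}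

theorem coe_pow_eq_algebraMap (hα : α ^ p = n) : (α : K) ^ p = algebraMap ℚ K n := by
  simpa using congrArg (algebraMap (𝓞 K) K) hα

theorem norm_intCast_sub (hp : p.Prime) (hK : finrank ℚ K = p) (hα : α ^ p = n)
    (hn : ∀ b : ℚ, b ^ p ≠ n) (r : ℤ) : Algebra.norm ℤ ((r : 𝓞 K) - α) = r ^ p - n := by
  have h := norm_algebraMap_sub hp hK (coe_pow_eq_algebraMap hα) hn r
  have hcoe : algebraMap ℚ K r - α = (((r : 𝓞 K) - α : 𝓞 K) : K) := by simp
  rw [hcoe, ← Algebra.coe_norm_int] at h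
  exact_mod_cast h

theorem discr_dvd_of_pow_eq (hp : p.Prime) (hodd : Odd p) (hK : finrank ℚ K = p)
    (hα : α ^ p = n) (hn : ∀ b : ℚ, b ^ p ≠ n) : discr K ∣ p ^ p * n ^ (p - 1) := by
  have h := discr_pow_of_pow_eq hp hodd hK (coe_pow_eq_algebraMap hα) hn
  have hcoe : (fun i : Fin p => (α : K) ^ (i : ℕ)) = fun i : Fin p =>
      ((α ^ (i : ℕ) : 𝓞 K) : K) := by simp
  rw [hcoe, ← coe_discr_int] at h
  have hdvd := discr_dvd_discr_of_card_eq (by simp [hK]) fun i : Fin p => α ^ (i : ℕ)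
  rw [show Algebra.discr ℤ (fun i : Fin p => α ^ (i : ℕ)) =
    (-1) ^ (p * (p - 1) / 2) * (p ^ p * n ^ (p - 1)) by exact_mod_cast h] at hdvd
  exact ((isUnit_one.neg.pow _).dvd_mul_left).mp hdvd

theorem nrRealPlaces_eq_one_of_pow_eq (hp : p.Prime) (hodd : Odd p) (hK : finrank ℚ K = p)
    (hα : α ^ p = n) (hn : ∀ b : ℚ, b ^ p ≠ n) : InfinitePlace.nrRealPlaces K = 1 := by
  classical
  refine le_antisymm ?_ (InfinitePlace.nrRealPlaces_pos_of_odd_finrank (hK ▸ hodd))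
  rw [← InfinitePlace.card_real_embeddings, Fintype.card_le_one_iff]
  rintro ⟨φ, hφ⟩ ⟨ψ, hψ⟩
  have hreal : (hφ.embedding : K →+* ℝ) α = hψ.embedding α := by
    refine hodd.strictMono_pow.injective ?_
    simp only [← map_pow, coe_pow_eq_algebraMap hα]
    simp
  have hgen : φ α = ψ α := by
    rw [← hφ.coe_embedding_apply, ← hψ.coe_embedding_apply, hreal]
  have hadj := adjoin_simple_eq_top_of_pow_eq hp hK (coe_pow_eq_algebraMap hα) hn
  ext x
  have hx : x ∈ IntermediateField.adjoin ℚ {(α : K)} := hadj ▸ IntermediateField.mem_top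
  induction hx using IntermediateField.adjoin_induction with
  | mem x hx => rw [Set.mem_singleton_iff.mp hx]; exact hgen
  | algebraMap x => simp
  | add x y _ _ h h' => simp only [map_add] at *; rw [h, h']
  | inv x _ h => simp only [map_inv₀] at *; rw [h]
  | mul x y _ _ h h' => simp only [map_mul] at *; rw [h, h']

theorem nrComplexPlaces_eq_of_pow_eq (hp : p.Prime) (hodd : Odd p) (hK : finrank ℚ K = p)
    (hα : α ^ p = n) (hn : ∀ b : ℚ, b ^ p ≠ n) :
    InfinitePlace.nrComplexPlaces K = (p - 1) / 2 := by
  have h := InfinitePlace.card_add_two_mul_card_eq_rank K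
  rw [nrRealPlaces_eq_one_of_pow_eq hp hodd hK hα hn, hK] at h
  lia

theorem unitsRank_eq_of_pow_eq (hp : p.Prime) (hodd : Odd p) (hK : finrank ℚ K = p)
    (hα : α ^ p = n) (hn : ∀ b : ℚ, b ^ p ≠ n) : Units.rank K = (p - 1) / 2 := by
  rw [Units.rank, InfinitePlace.card_eq_nrRealPlaces_add_nrComplexPlaces,
    nrRealPlaces_eq_one_of_pow_eq hp hodd hK hα hn,
    nrComplexPlaces_eq_of_pow_eq hp hodd hK hα hn, Nat.add_sub_cancel_left]

end NumberField

section FiniteField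

variable {k : Type*} [Field k] [Fintype k]

theorem pow_five_eq_two_cases_of_card_lt_fourteen (hk : Fintype.card k < 14) {t : k}
    (ht : t ^ 5 = 2) :
    t = 0 ∨ 1 + t = 0 ∨ 1 + t ^ 2 = 0 ∨ 1 - t ^ 3 = 0 ∨ 3 - 2 * t ^ 3 = 0 := by
  have hpp : IsPrimePow (Fintype.card k) := FiniteField.isPrimePow_card k
  have htq : t ^ Fintype.card k = t := FiniteField.pow_card t
  have hq : (Fintype.card k : k) = 0 := Nat.cast_card_eq_zero k
  have hzero : (2 : k) = 0 → t = 0 := fun h => eq_zero_of_pow_eq_zero (ht.trans h)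
  generalize Fintype.card k = q at *
  interval_cases q <;> push_cast at hq
  · exact absurd hpp not_isPrimePow_zero
  · exact absurd hpp not_isPrimePow_one
  · exact .inl (hzero hq)
  · exact .inr (.inl (by linear_combination ht - (t ^ 2 + 1) * htq + hq))
  · exact .inl (hzero (eq_zero_of_pow_eq_zero (n := 2) (by linear_combination hq)))
  · have h : t = 2 := htq.symm.trans ht
    exact .inr (.inr (.inl (by rw [h]; linear_combination hq)))
  · exact absurd hpp (by decide +kernel)
  · have h : t * (2 * t - 1) = 0 := by linear_combination htq - t ^ 2 * ht
    refine (mul_eq_zero.mp h).imp_right fun h => .inr (.inr (.inl ?_))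
    linear_combination t ^ 3 * hq - (4 * t ^ 2 + 2 * t + 1) * h
  · exact .inl (hzero (eq_zero_of_pow_eq_zero (n := 3) (by linear_combination hq)))
  · have h3 : (3 : k) = 0 := eq_zero_of_pow_eq_zero (n := 2) (by linear_combination hq)
    have h : t ^ 2 = 4 := by linear_combination (t ^ 5 + 2) * ht - t * htq
    exact .inr (.inl (by linear_combination ht - t * (t ^ 2 + 4) * h + (1 - 5 * t) * h3))
  · exact absurd hpp (by decide +kernel)
  · exact .inl (by linear_combination 4 * (htq - t * (t ^ 5 + 2) * ht) - t * hq)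
  · exact absurd hpp (by decide +kernel)
  · have h : t ^ 3 = 8 := by linear_combination (t ^ 10 + 2 * t ^ 5 + 4) * ht - t ^ 2 * htq
    exact .inr (.inr (.inr (.inr (by rw [h]; linear_combination -hq))))

end FiniteField

section RingOfIntegers

variable {K : Type*} [Field K] [NumberField K]

theorem prime_of_prime_norm {g : 𝓞 K} (hg : (Algebra.norm ℤ g).natAbs.Prime) : Prime g := by
  have hg0 : g ≠ 0 := by
    rintro rfl
    simp [Algebra.norm_zero, Nat.not_prime_zero] at hg
  rw [← Ideal.span_singleton_prime hg0]
  exact Ideal.isPrime_of_irreducible_absNorm (by rwa [Ideal.absNorm_span_singleton])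

theorem eq_span_singleton_of_prime_mem {R : Type*} [CommRing R]
    [Ring.DimensionLEOne R] {P : Ideal R} (hP : P ≠ ⊤) {g : R} (hg : Prime g) (hgP : g ∈ P) :
    P = Ideal.span {g} := by
  have hprime : (Ideal.span {g}).IsPrime := (Ideal.span_singleton_prime hg.ne_zero).mpr hg
  have hmax := hprime.isMaximal (by simpa using hg.ne_zero)
  exact (hmax.eq_of_le hP ((Ideal.span_singleton_le_iff_mem P).mpr hgP)).symm

theorem norm_intCast_sub_of_lt_of_lt (hK : finrank ℚ K = 5) {α : 𝓞 K} {n : ℤ}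
    (hα : α ^ 5 = n) (k : ℤ) (h₁ : k ^ 5 < n) (h₂ : n < (k + 1) ^ 5) (r : ℤ) :
    Algebra.norm ℤ ((r : 𝓞 K) - α) = r ^ 5 - n :=
  norm_intCast_sub Nat.prime_five hK hα (ratCast_pow_ne_of_lt_of_lt (by decide) h₁ h₂) r

end RingOfIntegers

section FifthRootOfTwo

variable {K : Type*} [Field K] [NumberField K] {θ : 𝓞 K}

theorem ratCast_pow_five_ne_two (b : ℚ) : b ^ 5 ≠ (2 : ℤ) :=
  ratCast_pow_ne_of_lt_of_lt (k := 1) (by decide) (by norm_num) (by norm_num) b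

theorem nrComplexPlaces_eq_two (hK : finrank ℚ K = 5) (hθ : θ ^ 5 = 2) :
    InfinitePlace.nrComplexPlaces K = 2 :=
  nrComplexPlaces_eq_of_pow_eq Nat.prime_five (by decide) hK (n := 2) (by simpa using hθ)
    ratCast_pow_five_ne_two

theorem unitsRank_eq_two (hK : finrank ℚ K = 5) (hθ : θ ^ 5 = 2) : Units.rank K = 2 :=
  unitsRank_eq_of_pow_eq Nat.prime_five (by decide) hK (n := 2) (by simpa using hθ)
    ratCast_pow_five_ne_two

theorem minkowskiBound_lt_fourteen (hK : finrank ℚ K = 5) (hθ : θ ^ 5 = 2) :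
    (4 / Real.pi) ^ InfinitePlace.nrComplexPlaces K *
      ((finrank ℚ K).factorial / (finrank ℚ K) ^ (finrank ℚ K) * √|(discr K : ℝ)|) < 14 := by
  have hdvd := discr_dvd_of_pow_eq Nat.prime_five (by decide) hK (n := 2) (by simpa using hθ)
    ratCast_pow_five_ne_two
  have hdiscr : |(discr K : ℝ)| ≤ 50000 := by
    exact_mod_cast Int.le_of_dvd (by norm_num) ((abs_dvd _ _).mpr hdvd)
  have hsqrt : √|(discr K : ℝ)| ≤ 223.61 := by
    rw [Real.sqrt_le_left (by norm_num)]
    linarith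
  have hpi : 4 / Real.pi ≤ 1.2733 := by
    rw [div_le_iff₀ Real.pi_pos]
    linarith [Real.pi_gt_d4]
  rw [nrComplexPlaces_eq_two hK hθ, hK]
  calc _ ≤ (1.2733 : ℝ) ^ 2 * ((Nat.factorial 5 : ℕ) / ((5 : ℕ) : ℝ) ^ 5 * 223.61) := by gcongr
    _ < 14 := by norm_num [Nat.factorial]

theorem norm_fifthRoot (hK : finrank ℚ K = 5) (hθ : θ ^ 5 = 2) : Algebra.norm ℤ θ = 2 := by
  simpa using norm_intCast_sub_of_lt_of_lt hK (α := -θ) (n := -2)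
    (by rw [Odd.neg_pow (by decide), hθ]; simp) (-2) (by norm_num) (by norm_num) 0

theorem norm_one_add_fifthRoot (hK : finrank ℚ K = 5) (hθ : θ ^ 5 = 2) :
    Algebra.norm ℤ (1 + θ) = 3 := by
  simpa using norm_intCast_sub_of_lt_of_lt hK (α := -θ) (n := -2)
    (by rw [Odd.neg_pow (by decide), hθ]; simp) (-2) (by norm_num) (by norm_num) 1

theorem norm_one_add_fifthRoot_sq (hK : finrank ℚ K = 5) (hθ : θ ^ 5 = 2) :
    Algebra.norm ℤ (1 + θ ^ 2) = 5 := by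
  simpa using norm_intCast_sub_of_lt_of_lt hK (α := -θ ^ 2) (n := -4)
    (by push_cast; linear_combination (-θ ^ 5 - 2) * hθ) (-2) (by norm_num) (by norm_num) 1

theorem norm_one_sub_fifthRoot_cube (hK : finrank ℚ K = 5) (hθ : θ ^ 5 = 2) :
    Algebra.norm ℤ (1 - θ ^ 3) = -7 := by
  simpa using norm_intCast_sub_of_lt_of_lt hK (α := θ ^ 3) (n := 8)
    (by push_cast; linear_combination (θ ^ 10 + 2 * θ ^ 5 + 4) * hθ) 1
    (by norm_num) (by norm_num) 1

theorem norm_three_sub_two_mul_fifthRoot_cube (hK : finrank ℚ K = 5) (hθ : θ ^ 5 = 2) :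
    Algebra.norm ℤ (3 - 2 * θ ^ 3) = -13 := by
  simpa using norm_intCast_sub_of_lt_of_lt hK (α := 2 * θ ^ 3) (n := 256)
    (by push_cast; linear_combination 32 * (θ ^ 10 + 2 * θ ^ 5 + 4) * hθ) 3
    (by norm_num) (by norm_num) 3

theorem exists_prime_mem_of_absNorm_lt (hK : finrank ℚ K = 5) (hθ : θ ^ 5 = 2)
    {P : Ideal (𝓞 K)} (hP : P.IsPrime) (hP0 : P ≠ ⊥) (hlt : Ideal.absNorm P < 14) :
    ∃ g ∈ P, Prime g := by
  have := hP.isMaximal hP0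
  let : Field (𝓞 K ⧸ P) := Ideal.Quotient.field P
  have : Finite (𝓞 K ⧸ P) := Ideal.finiteQuotientOfFreeOfNeBot P hP0
  let : Fintype (𝓞 K ⧸ P) := Fintype.ofFinite _
  rw [Ideal.absNorm_apply, Submodule.cardQuot_apply, Nat.card_eq_fintype_card] at hlt
  have hcases := pow_five_eq_two_cases_of_card_lt_fourteen hlt (t := Ideal.Quotient.mk P θ)
    (by rw [← map_pow, hθ, map_ofNat])
  simp only [← map_one (Ideal.Quotient.mk P), ← map_ofNat (Ideal.Quotient.mk P), ← map_pow,
    ← map_mul, ← map_add, ← map_sub, Ideal.Quotient.eq_zero_iff_mem] at hcases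
  rcases hcases with h | h | h | h | h <;> refine ⟨_, h, prime_of_prime_norm ?_⟩
  · rw [norm_fifthRoot hK hθ]; norm_num
  · rw [norm_one_add_fifthRoot hK hθ]; norm_num
  · rw [norm_one_add_fifthRoot_sq hK hθ]; norm_num
  · rw [norm_one_sub_fifthRoot_cube hK hθ]; norm_num
  · rw [norm_three_sub_two_mul_fifthRoot_cube hK hθ]; norm_num

theorem isPrincipalIdealRing_of_pow_five_eq_two (hK : finrank ℚ K = 5) (hθ : θ ^ 5 = 2) :
    IsPrincipalIdealRing (𝓞 K) := by
  refine RingOfIntegers.isPrincipalIdealRing_of_isPrincipal_of_norm_le_of_isPrime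
    fun I hI hle => ?_
  have hlt : Ideal.absNorm (I : Ideal (𝓞 K)) < 14 := by
    exact_mod_cast hle.trans_lt (minkowskiBound_lt_fourteen hK hθ)
  obtain ⟨g, hgI, hg⟩ :=
    exists_prime_mem_of_absNorm_lt hK hθ hI (nonZeroDivisors.coe_ne_zero I) hlt
  exact ⟨g, eq_span_singleton_of_prime_mem hI.ne_top hg hgI⟩

end FifthRootOfTwo

section DyadicRing

variable {K : Type*} [Field K]

/-- `R` is a discrete valuation ring of the field `K` with residue field `𝔽₂` and a uniformizer
`θ` satisfying `θ ^ e = 2`; in particular `e` is the ramification index. -/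
structure IsDyadic (R : ValuationSubring K) (θ : R) (e : ℕ) : Prop where
  isDiscreteValuationRing : IsDiscreteValuationRing R
  irreducible : Irreducible θ
  pow_eq_two : θ ^ e = 2
  dvd_or_dvd_sub_one (x : R) : θ ∣ x ∨ θ ∣ x - 1

@[simp, norm_cast]
theorem coe_ofNat_valuationSubring (R : ValuationSubring K) (n : ℕ) [n.AtLeastTwo] :
    ((ofNat(n) : R) : K) = ofNat(n) :=
  map_ofNat (algebraMap R K) n

namespace IsDyadic

variable {R : ValuationSubring K} {θ : R} {e : ℕ} (h : IsDyadic R θ e)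

include h

theorem coe_pow_eq_two : (θ : K) ^ e = 2 := by
  simpa [coe_ofNat_valuationSubring] using congrArg Subtype.val h.pow_eq_two

theorem coe_ne_zero : (θ : K) ≠ 0 := by
  exact_mod_cast h.irreducible.ne_zero

theorem ramification_pos : 0 < e := by
  refine Nat.pos_of_ne_zero fun he => one_ne_zero (α := K) ?_
  have h2 := h.coe_pow_eq_two
  rw [he, pow_zero] at h2
  linear_combination -h2

theorem dvd_two : θ ∣ 2 :=
  h.pow_eq_two ▸ dvd_pow_self θ h.ramification_pos.ne'

theorem isUnit_one_add_mul (y : R) : IsUnit (1 + θ * y) := by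
  have hθ : θ * y ∈ nonunits R := fun hu => h.irreducible.not_isUnit (isUnit_of_mul_isUnit_left hu)
  by_contra hu
  exact one_notMem_nonunits (α := R) (by
    simpa using IsLocalRing.nonunits_add hu (by simpa using hθ : -(θ * y) ∈ nonunits R))

theorem one_add_mul_ne_zero (y : R) : (1 + θ * y : K) ≠ 0 := by
  exact_mod_cast (h.isUnit_one_add_mul y).ne_zero

theorem exists_inv_one_add_pow_mul (n : ℕ) (c : R) :
    ∃ c' : R, (1 + θ ^ (n + 1) * c : K) * (1 + θ ^ (n + 1) * c') = 1 := by
  obtain ⟨u, hu⟩ := (h.isUnit_one_add_mul (θ ^ n * c)).exists_right_inv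
  refine ⟨-(u * c), ?_⟩
  have hu' : (1 + θ * (θ ^ n * c) : K) * u = 1 := by exact_mod_cast congrArg Subtype.val hu
  push_cast
  linear_combination -(θ : K) ^ (n + 1) * c * hu'

theorem exists_eq_one_add_mul_of_isUnit {x : R} (hx : IsUnit x) : ∃ y, x = 1 + θ * y := by
  obtain ⟨y, hy⟩ := (h.dvd_or_dvd_sub_one x).resolve_left fun hdvd =>
    h.irreducible.not_isUnit (isUnit_of_dvd_unit hdvd hx)
  exact ⟨y, by rw [← hy]; ring⟩

theorem exists_eq_zpow_mul {x : K} (hx : x ≠ 0) :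
    ∃ n : ℤ, ∃ y : R, x = (θ : K) ^ n * (1 + θ * y) := by
  have := h.isDiscreteValuationRing
  have integral {x : R} (hx : x ≠ 0) : ∃ n : ℕ, ∃ y : R, (x : K) = (θ : K) ^ n * (1 + θ * y) := by
    obtain ⟨n, u, rfl⟩ := IsDiscreteValuationRing.eq_unit_mul_pow_irreducible hx h.irreducible
    obtain ⟨y, hy⟩ := h.exists_eq_one_add_mul_of_isUnit u.isUnit
    exact ⟨n, y, by rw [hy]; push_cast; ring⟩
  rcases R.mem_or_inv_mem x with hxR | hxR
  · obtain ⟨n, y, hy⟩ := integral (x := ⟨x, hxR⟩) fun h0 => hx (congrArg Subtype.val h0)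
    exact ⟨n, y, by rw [zpow_natCast, ← hy]⟩
  · obtain ⟨n, y, hy⟩ := integral (x := ⟨x⁻¹, hxR⟩) fun h0 =>
      inv_ne_zero hx (congrArg Subtype.val h0)
    obtain ⟨z, hz⟩ := h.exists_inv_one_add_pow_mul 0 y
    refine ⟨-n, z, ?_⟩
    have hz' : (1 + θ * y : K) * (1 + θ * z) = 1 := by simpa using hz
    rw [← inv_inv x, show x⁻¹ = _ from hy, mul_inv, zpow_neg, zpow_natCast,
      inv_eq_of_mul_eq_one_right hz']

theorem le_of_zpow_mul_eq {a b : ℤ} {x y : R}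
    (hxy : (θ : K) ^ a * (1 + θ * x) = θ ^ b * y) : b ≤ a := by
  by_contra! hlt
  obtain ⟨k, rfl⟩ : ∃ k : ℕ, b = a + 1 + k := ⟨(b - a - 1).toNat, by lia⟩
  have h0 := h.coe_ne_zero
  rw [zpow_add₀ h0, zpow_add₀ h0, zpow_one, zpow_natCast, mul_assoc, mul_assoc] at hxy
  have hxy' := mul_left_cancel₀ (zpow_ne_zero a h0) hxy
  refine h.one_add_mul_ne_zero (x - θ ^ k * y) ?_
  push_cast
  linear_combination hxy'

theorem mul_add_two_shape {τ : K} (hτ : τ ≠ 0) :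
    (∃ k : ℤ, k < e ∧ ∃ y : R, τ * (τ + 2) = θ ^ (2 * k) * (1 + θ * y)) ∨
      ∃ t : R, τ = θ ^ e * t := by
  obtain ⟨k, y, rfl⟩ := h.exists_eq_zpow_mul hτ
  have h0 := h.coe_ne_zero
  rcases lt_or_ge k e with hk | hk
  · obtain ⟨m, hm⟩ : ∃ m : ℕ, (e : ℤ) = k + 1 + m := ⟨(e - k - 1).toNat, by lia⟩
    have h2 : (2 : K) = θ ^ k * θ * θ ^ m := by
      rw [← h.coe_pow_eq_two, ← zpow_natCast, ← zpow_natCast, ← zpow_add_one₀ h0,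
        ← zpow_add₀ h0, ← hm]
    refine .inl ⟨k, hk, y + (1 + θ * y) * (y + θ ^ m), ?_⟩
    rw [two_mul, zpow_add₀ h0]
    push_cast
    linear_combination (θ : K) ^ k * (1 + θ * y) * h2
  · obtain ⟨m, rfl⟩ : ∃ m : ℕ, k = e + m := ⟨(k - e).toNat, by lia⟩
    refine .inr ⟨θ ^ m * (1 + θ * y), ?_⟩
    rw [zpow_add₀ h0, zpow_natCast, zpow_natCast]
    push_cast
    ring

theorem dvd_mul_add_one (t : R) : θ ∣ t * (t + 1) := by
  rcases h.dvd_or_dvd_sub_one t with ht | ht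
  · exact ht.mul_right _
  · refine Dvd.dvd.mul_left ?_ _
    rw [show t + 1 = t - 1 + 2 by ring]
    exact dvd_add ht h.dvd_two

theorem not_isSquare_one_add {j : ℕ} (hj : Odd j ∧ j < 2 * e ∨ j = 2 * e) (y : R) :
    ¬ IsSquare (1 + θ ^ j * (1 + θ * y) : K) := by
  rintro ⟨s, hs⟩
  set τ := s - 1 with hτ
  have hj_eq : τ * (τ + 2) = (θ : K) ^ (j : ℤ) * (1 + θ * y) := by
    rw [hτ, zpow_natCast]; linear_combination -hs
  have hτ0 : τ ≠ 0 := by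
    intro h0
    rw [h0, zero_mul] at hj_eq
    exact mul_ne_zero (zpow_ne_zero _ h.coe_ne_zero) (h.one_add_mul_ne_zero y) hj_eq.symm
  rcases h.mul_add_two_shape hτ0 with ⟨k, hk, y', hk_eq⟩ | ⟨t, ht⟩
  · have hjk : (j : ℤ) = 2 * k := le_antisymm
      (h.le_of_zpow_mul_eq (y := 1 + θ * y) (by push_cast; exact hk_eq.symm.trans hj_eq))
      (h.le_of_zpow_mul_eq (y := 1 + θ * y') (by push_cast; exact hj_eq.symm.trans hk_eq))
    rcases hj with ⟨⟨i, rfl⟩, -⟩ | rfl <;> push_cast at hjk <;> lia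
  · obtain ⟨w, hw⟩ := h.dvd_mul_add_one t
    have hw' : (t : K) * (t + 1) = θ * w := by exact_mod_cast congrArg Subtype.val hw
    have hle := h.le_of_zpow_mul_eq (a := j) (b := (2 * e + 1 : ℕ)) (x := y) (y := w) (by
      rw [← hj_eq, ht, zpow_natCast]
      linear_combination (θ : K) ^ (2 * e) * hw' - (θ : K) ^ e * t * h.coe_pow_eq_two)
    lia

theorem eq_one_add_or_eq_neg_of_sq_eq {n : ℕ} {σ : K} {y : R}
    (hσ : σ ^ 2 = 1 + θ ^ (2 * e + n) * y) :
    ∃ f : R, σ = 1 + θ ^ (e + n) * f ∨ σ = -(1 + θ ^ (e + n) * f) := by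
  set τ := σ - 1 with hτ
  have hτ_eq : τ * (τ + 2) = (θ : K) ^ (2 * e + n) * y := by
    rw [hτ]; linear_combination hσ
  rcases eq_or_ne τ 0 with hτ0 | hτ0
  · exact ⟨0, .inl (by rw [sub_eq_zero] at hτ0; simp [hτ0])⟩
  rcases h.mul_add_two_shape hτ0 with ⟨k, hk, y', hk_eq⟩ | ⟨t, ht⟩
  · have hle := h.le_of_zpow_mul_eq (a := 2 * k) (b := (2 * e + n : ℕ)) (x := y') (y := y)
      (by rw [← hk_eq, hτ_eq, zpow_natCast])
    lia
  have h2 := h.coe_pow_eq_two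
  have ht_eq : (t : K) * (t + 1) = θ ^ n * y := by
    refine mul_left_cancel₀ (pow_ne_zero (2 * e) h.coe_ne_zero) ?_
    rw [ht] at hτ_eq
    linear_combination hτ_eq + (θ : K) ^ e * t * h2
  have hσt : σ = 1 + θ ^ e * t := by rw [← ht, hτ]; ring
  rcases h.dvd_or_dvd_sub_one t with ⟨u, rfl⟩ | ⟨u, hu⟩
  · obtain ⟨z, hz⟩ := h.exists_inv_one_add_pow_mul 0 u
    refine ⟨y * (1 + θ * z), .inl ?_⟩
    push_cast at *
    rw [hσt]
    linear_combination (θ : K) ^ e * (1 + θ * z) * ht_eq - (θ : K) ^ e * (θ * u) * hz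
  · obtain rfl : t = 1 + θ * u := by rw [← hu]; ring
    obtain ⟨z, hz⟩ := h.exists_inv_one_add_pow_mul 0 u
    refine ⟨-(y * (1 + θ * z)), .inr ?_⟩
    push_cast at *
    rw [hσt]
    linear_combination (θ : K) ^ e * (1 + θ * z) * ht_eq - (θ : K) ^ e * (2 + θ * u) * hz - h2

end IsDyadic

end DyadicRing

section SquareClasses

variable {K : Type*} [Field K]

/-- `x` is nonzero and lies in the class, modulo nonzero squares of `K`, of an element congruent
to `1` modulo `θ ^ n`. -/
def IsSquareMod (R : ValuationSubring K) (θ : R) (n : ℕ) (x : K) : Prop :=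
  x ≠ 0 ∧ ∃ z : K, z ≠ 0 ∧ ∃ y : R, x * z ^ 2 = 1 + θ ^ n * y

/-- The quadratic defect of `x`, recorded by its exponent: `j` is the largest level at which `x` is
congruent to a square in the sense of `IsSquareMod`. -/
def HasDefect (R : ValuationSubring K) (θ : R) (j : ℕ) (x : K) : Prop :=
  IsSquareMod R θ j x ∧ ¬ IsSquareMod R θ (j + 1) x

variable {R : ValuationSubring K} {θ : R}

namespace IsSquareMod

variable {m n : ℕ} {x y s : K}

theorem mono (hmn : m ≤ n) (hx : IsSquareMod R θ n x) : IsSquareMod R θ m x := by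
  obtain ⟨hx0, z, hz, u, hu⟩ := hx
  obtain ⟨k, rfl⟩ := Nat.exists_eq_add_of_le hmn
  exact ⟨hx0, z, hz, θ ^ k * u, by rw [hu]; push_cast; ring⟩

theorem mul (hx : IsSquareMod R θ n x) (hy : IsSquareMod R θ n y) :
    IsSquareMod R θ n (x * y) := by
  obtain ⟨hx0, z, hz, u, hu⟩ := hx
  obtain ⟨hy0, w, hw, v, hv⟩ := hy
  refine ⟨mul_ne_zero hx0 hy0, z * w, mul_ne_zero hz hw, u + v + θ ^ n * (u * v), ?_⟩
  calc x * y * (z * w) ^ 2 = (x * z ^ 2) * (y * w ^ 2) := by ring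
    _ = _ := by rw [hu, hv]; push_cast; ring

theorem of_isSquare (hs : IsSquare s) (hs0 : s ≠ 0) : IsSquareMod R θ n s := by
  obtain ⟨r, rfl⟩ := hs
  have hr := left_ne_zero_of_mul hs0
  exact ⟨hs0, r⁻¹, inv_ne_zero hr, 0, by simp; field_simp⟩

theorem of_mul_left (hxy : IsSquareMod R θ n (x * y)) (hx : IsSquareMod R θ n x) :
    IsSquareMod R θ n y := by
  have hy := right_ne_zero_of_mul hxy.1
  have hx2 := of_isSquare (R := R) (θ := θ) (n := n) (IsSquare.sq (x⁻¹))
    (pow_ne_zero 2 (inv_ne_zero hx.1))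
  convert (hxy.mul hx).mul hx2 using 1
  have := hx.1
  field_simp

theorem prod {ι : Type*} {S : Finset ι} {f : ι → K} (hf : ∀ i ∈ S, IsSquareMod R θ n (f i)) :
    IsSquareMod R θ n (∏ i ∈ S, f i) :=
  Finset.prod_induction f _ (fun _ _ => mul) (of_isSquare IsSquare.one one_ne_zero) hf

end IsSquareMod

theorem IsDyadic.isSquareMod_of_eq {e n : ℕ} (h : IsDyadic R θ e) {x z : K} {y : R}
    (hxz : x * z ^ 2 = 1 + θ ^ (n + 1) * y) : IsSquareMod R θ (n + 1) x := by
  have hne : x * z ^ 2 ≠ 0 := by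
    rw [hxz, pow_succ', mul_assoc]
    exact_mod_cast h.one_add_mul_ne_zero (θ ^ n * y)
  have hz := (pow_ne_zero_iff two_ne_zero).mp (right_ne_zero_of_mul hne)
  exact ⟨left_ne_zero_of_mul hne, z, hz, y, hxz⟩

namespace HasDefect

variable {i j : ℕ} {x y : K}

theorem ne_zero (hx : HasDefect R θ j x) : x ≠ 0 := hx.1.1

theorem not_isSquare (hx : HasDefect R θ j x) : ¬ IsSquare x :=
  fun hs => hx.2 (.of_isSquare hs hx.ne_zero)

theorem not_isSquareMod (hx : HasDefect R θ i x) (hij : i < j) : ¬ IsSquareMod R θ j x :=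
  fun hj => hx.2 (hj.mono hij)

theorem unique (hi : HasDefect R θ i x) (hj : HasDefect R θ j x) : i = j :=
  le_antisymm (not_lt.mp fun hlt => hj.not_isSquareMod hlt hi.1)
    (not_lt.mp fun hlt => hi.not_isSquareMod hlt hj.1)

theorem mul_isSquareMod (hx : HasDefect R θ i x) (hij : i < j) (hy : IsSquareMod R θ j y) :
    HasDefect R θ i (x * y) := by
  refine ⟨hx.1.mul (hy.mono hij.le), fun hxy => hx.2 ?_⟩
  rw [mul_comm] at hxy
  exact hxy.of_mul_left (hy.mono hij)

theorem pow (hx : HasDefect R θ j x) {k : ℕ} (hk : Odd k) : HasDefect R θ j (x ^ k) := by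
  obtain ⟨l, rfl⟩ := hk
  rw [pow_succ', pow_mul']
  exact hx.mul_isSquareMod (Nat.lt_succ_self j)
    (.of_isSquare (IsSquare.sq _) (pow_ne_zero 2 (pow_ne_zero l hx.ne_zero)))

end HasDefect

theorem IsDyadic.hasDefect_of_eq {e j : ℕ} (h : IsDyadic R θ e)
    (hj : Odd j ∧ j < 2 * e ∨ j = 2 * e) {x z : K} {y : R}
    (hxz : x * z ^ 2 = 1 + θ ^ j * (1 + θ * y)) : HasDefect R θ j x := by
  obtain ⟨i, rfl⟩ : ∃ i, j = i + 1 := Nat.exists_eq_succ_of_ne_zero <| by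
    have he := h.ramification_pos
    rcases hj with ⟨hodd, -⟩ | rfl
    · exact hodd.pos.ne'
    · lia
  refine ⟨h.isSquareMod_of_eq (y := 1 + θ * y) (by push_cast; exact hxz), ?_⟩
  rintro ⟨-, w, hw, u, hu⟩
  obtain ⟨c, hc⟩ := h.exists_inv_one_add_pow_mul (i + 1) u
  refine h.not_isSquare_one_add hj (y + c + θ ^ (i + 1) * (1 + θ * y) * c) ⟨z / w, ?_⟩
  have hzw : z / w * (z / w) = x * z ^ 2 * (1 + θ ^ (i + 1 + 1) * c) := by
    field_simp
    linear_combination -z ^ 2 * (hc + (1 + θ ^ (i + 1 + 1) * c) * hu)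
  rw [hzw, hxz]
  push_cast
  ring

end SquareClasses

section IndependentDefects

variable {K ι : Type*} [Field K] [Fintype ι]

/-- `x` is a nonzero square times a product of members of the family `g`. -/
def IsProductModSquares (g : ι → K) (x : K) : Prop :=
  ∃ a : ι → ℕ, ∃ s : K, s ≠ 0 ∧ x = (∏ i, g i ^ a i) * s ^ 2

theorem IsProductModSquares.mul {g : ι → K} {x y : K} (hx : IsProductModSquares g x)
    (hy : IsProductModSquares g y) : IsProductModSquares g (x * y) := by
  obtain ⟨a, s, hs, rfl⟩ := hx
  obtain ⟨b, t, ht, rfl⟩ := hy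
  refine ⟨a + b, s * t, mul_ne_zero hs ht, ?_⟩
  simp only [Pi.add_apply, pow_add, Finset.prod_mul_distrib]
  ring

theorem IsProductModSquares.of_sq (g : ι → K) {s : K} (hs : s ≠ 0) :
    IsProductModSquares g (s ^ 2) :=
  ⟨0, s, hs, by simp⟩

variable {R : ValuationSubring K} {θ : R} {g : ι → K} {δ : ι → ℕ}

/- The defect of a product is that of the factor of odd exponent with the smallest defect. -/
theorem forall_even_or_exists_hasDefect_prod (hδ : δ.Injective)
    (hg : ∀ i, HasDefect R θ (δ i) (g i)) (a : ι → ℕ) :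
    (∀ i, Even (a i)) ∨ ∃ i, HasDefect R θ (δ i) (∏ i, g i ^ a i) := by
  classical
  by_cases hodd : ({i | Odd (a i)} : Finset ι).Nonempty
  · obtain ⟨i, hi, hmin⟩ := Finset.exists_min_image _ δ hodd
    rw [Finset.mem_filter_univ] at hi
    refine .inr ⟨i, ?_⟩
    rw [← Finset.mul_prod_erase _ _ (Finset.mem_univ i)]
    refine ((hg i).pow hi).mul_isSquareMod (Nat.lt_succ_self _) (.prod fun j hj => ?_)
    rcases Nat.even_or_odd (a j) with hj' | hj'
    · exact .of_isSquare (hj'.isSquare_pow _) (pow_ne_zero _ (hg j).ne_zero)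
    · have hle := hmin j ((Finset.mem_filter_univ j).mpr hj')
      have hlt := hle.lt_of_ne fun heq => (Finset.ne_of_mem_erase hj) (hδ heq).symm
      exact ((hg j).pow hj').1.mono hlt
  · refine .inl fun i => Nat.not_odd_iff_even.mp fun hi => hodd ⟨i, ?_⟩
    exact (Finset.mem_filter_univ i).mpr hi

theorem even_of_isSquare_prod (hδ : δ.Injective) (hg : ∀ i, HasDefect R θ (δ i) (g i))
    {a : ι → ℕ} (ha : IsSquare (∏ i, g i ^ a i)) (i : ι) : Even (a i) :=
  (forall_even_or_exists_hasDefect_prod hδ hg a).elim (fun heven => heven i)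
    fun ⟨_, hdef⟩ => absurd ha hdef.not_isSquare

theorem IsProductModSquares.isSquare_or_exists_hasDefect (hδ : δ.Injective)
    (hg : ∀ i, HasDefect R θ (δ i) (g i)) {x : K} (hx : IsProductModSquares g x) :
    IsSquare x ∨ ∃ i, HasDefect R θ (δ i) x := by
  obtain ⟨a, s, hs, rfl⟩ := hx
  refine (forall_even_or_exists_hasDefect_prod hδ hg a).imp (fun heven => ?_) fun ⟨i, hi⟩ =>
    ⟨i, hi.mul_isSquareMod (Nat.lt_succ_self _)
      (.of_isSquare (IsSquare.sq s) (pow_ne_zero 2 hs))⟩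
  refine IsSquare.mul ?_ (IsSquare.sq s)
  exact Finset.isSquare_prod _ fun i _ => (heven i).isSquare_pow _

theorem IsProductModSquares.isSquare_of_isSquareMod (hδ : δ.Injective)
    (hg : ∀ i, HasDefect R θ (δ i) (g i)) {x : K} (hx : IsProductModSquares g x) {n : ℕ}
    (hn : ∀ i, δ i < n) (hxn : IsSquareMod R θ n x) : IsSquare x :=
  (hx.isSquare_or_exists_hasDefect hδ hg).resolve_right fun ⟨i, hi⟩ =>
    hi.not_isSquareMod (hn i) hxn

end IndependentDefects

section Halving

theorem quadratic_eq_sq_mul_of_halving {K : Type*} [CommRing K] {a b s g κ : K}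
    (hg : g ^ 2 = s ^ 4 + a * s ^ 2 + b) (hκ : κ ^ 2 = a + 2 * s ^ 2 + 2 * g) :
    (s ^ 2 + g + s * κ) ^ 2 + a * (s ^ 2 + g + s * κ) + b = κ ^ 2 * (s ^ 2 + g + s * κ) := by
  linear_combination -hg - g * hκ - s * κ * hκ

theorem sq_sub_eq_mul_of_halving {K : Type*} [CommRing K] {a b s g κ : K}
    (hg : g ^ 2 = s ^ 4 + a * s ^ 2 + b) (hκ : κ ^ 2 = a + 2 * s ^ 2 + 2 * g) :
    (s ^ 2 + g + s * κ) ^ 2 - b = 2 * s * κ * (s ^ 2 + g + s * κ) := by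
  linear_combination hg - s ^ 2 * hκ

namespace IsDyadic

variable {K : Type*} [Field K] {R : ValuationSubring K} {θ : R} {e : ℕ} (h : IsDyadic R θ e)

include h

theorem mem_or_exists_mul_eq_one (x : K) : x ∈ R ∨ ∃ i : R, x * (θ * i) = 1 := by
  rcases eq_or_ne x 0 with rfl | hx0
  · exact .inl R.zero_mem
  rcases R.mem_or_inv_mem x with hx | hx
  · exact .inl hx
  rcases h.dvd_or_dvd_sub_one ⟨x⁻¹, hx⟩ with ⟨i, hi⟩ | ⟨i, hi⟩
  · refine .inr ⟨i, ?_⟩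
    have hi' : x⁻¹ = θ * i := congrArg Subtype.val hi
    rw [← hi', mul_inv_cancel₀ hx0]
  · obtain ⟨z, hz⟩ := (h.isUnit_one_add_mul i).exists_right_inv
    refine .inl ?_
    have hi' : x⁻¹ - 1 = θ * i := congrArg Subtype.val hi
    have hz' : (1 + θ * i : K) * z = 1 := congrArg Subtype.val hz
    rw [← hi', add_sub_cancel] at hz'
    rw [← inv_inv x, inv_eq_of_mul_eq_one_right hz']
    exact z.2

theorem isSquareMod_of_mul_eq_one {a b ε : R} {n : ℕ} {x y : K}
    (hx : x * (θ ^ (n + 1) * ε) = 1) (hy : y ^ 2 = x * (x ^ 2 + a * x + b)) :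
    IsSquareMod R θ (n + 1) x := by
  set w : K := θ ^ (n + 1) * ε with hw
  refine h.isSquareMod_of_eq (z := y * w ^ 2) (y := ε * (a + b * (θ ^ (n + 1) * ε))) ?_
  push_cast
  rw [← mul_assoc, ← hw]
  calc x * (y * w ^ 2) ^ 2
      = (x * w) ^ 4 + a * w * (x * w) ^ 3 + b * w ^ 2 * (x * w) ^ 2 := by
        rw [mul_pow, hy]; ring
    _ = 1 + w * (a + b * w) := by rw [hx]; ring

theorem exists_isogenous_inv {a b ε : R} {k : ℕ} {s y : K}
    (hs : s ^ 2 * (θ ^ (2 * e + (k + 1)) * ε) = 1)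
    (hy : y ^ 2 = s ^ 2 * ((s ^ 2) ^ 2 + a * s ^ 2 + b)) :
    ∃ g : K, g ^ 2 = s ^ 4 + a * s ^ 2 + b ∧
      ∃ μ : R, (a + 2 * s ^ 2 + 2 * g) * (θ ^ (k + 1) * μ) = 1 := by
  have hs0 : s ≠ 0 := fun h0 => by simp [h0] at hs
  have hg : (y / s) ^ 2 = s ^ 4 + a * s ^ 2 + b := by rw [div_pow, hy]; field_simp
  obtain ⟨g, f, hg, hgf⟩ : ∃ g : K, ∃ f : R, g ^ 2 = s ^ 4 + a * s ^ 2 + b ∧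
      g = s ^ 2 * (1 + θ ^ (e + (k + 1)) * f) := by
    have hσ : (y / s / s ^ 2) ^ 2 = 1 + (θ : K) ^ (2 * e + (k + 1)) *
        (ε * (a + b * (θ ^ (2 * e + (k + 1)) * ε)) : R) := by
      rw [div_pow, hg, div_eq_iff (by positivity)]
      push_cast
      linear_combination (-(a : K) * s ^ 2 - b * (1 + s ^ 2 * (θ ^ (2 * e + (k + 1)) * ε))) * hs
    obtain ⟨f, hf | hf⟩ := h.eq_one_add_or_eq_neg_of_sq_eq hσ <;>
      rw [div_eq_iff (pow_ne_zero 2 hs0)] at hf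
    · exact ⟨y / s, f, hg, by rw [hf]; ring⟩
    · exact ⟨-(y / s), f, by rw [neg_sq, hg], by rw [hf]; ring⟩
  obtain ⟨z, hz⟩ := h.exists_inv_one_add_pow_mul k (f + a * ε)
  refine ⟨g, hg, ε * (1 + θ ^ (k + 1) * z), ?_⟩
  have hX : a + 2 * s ^ 2 + 2 * g = θ ^ (2 * e) * s ^ 2 * (1 + θ ^ (k + 1) * (f + a * ε)) := by
    rw [hgf]
    linear_combination -(a : K) * hs -
      s ^ 2 * (θ ^ e + 2 + θ ^ (e + (k + 1)) * f) * h.coe_pow_eq_two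
  push_cast at hz ⊢
  rw [hX]
  linear_combination (s ^ 2 * (θ ^ (2 * e + (k + 1)) * ε)) * hz + hs

theorem isSquareMod_isogenous {a b μ : R} {k : ℕ} {s g : K}
    (hg : g ^ 2 = s ^ 4 + a * s ^ 2 + b)
    (hμ : (a + 2 * s ^ 2 + 2 * g) * (θ ^ (k + 1) * μ) = 1) :
    IsSquareMod R θ (2 * e + 1) (a + 2 * s ^ 2 + 2 * g) := by
  set X := a + 2 * s ^ 2 + 2 * g with hX
  set w : K := θ ^ (k + 1) * μ with hw
  have hXg : X ^ 2 - 2 * a * X + (a ^ 2 - 4 * b) = 4 * s ^ 2 * X := by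
    rw [hX]; linear_combination 4 * hg
  obtain ⟨v, hv⟩ := h.exists_inv_one_add_pow_mul k (-(a * μ))
  set v' : K := 1 + θ ^ (k + 1) * v
  have hv' : (1 - a * w) * v' = 1 := by
    push_cast at hv
    rw [hw]
    linear_combination hv
  refine h.isSquareMod_of_eq (z := 2 * s * w * v')
    (y := -(b * (θ ^ (2 * k + 1) * μ ^ 2) * (1 + θ ^ (k + 1) * v) ^ 2)) ?_
  calc X * (2 * s * w * v') ^ 2
      = ((X * w) ^ 2 - 2 * a * w * (X * w) + (a ^ 2 - 4 * b) * w ^ 2) * v' ^ 2 := by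
        linear_combination -(w * v') ^ 2 * hXg
    _ = ((1 - a * w) * v') ^ 2 - 2 ^ 2 * (b * w ^ 2 * v' ^ 2) := by rw [hμ]; ring
    _ = _ := by
      rw [hv', ← h.coe_pow_eq_two, hw]
      push_cast
      ring

theorem exists_inv_root {a : R} {k : ℕ} {μ : R} {s g κ : K} (hκ : a + 2 * s ^ 2 + 2 * g = κ * κ)
    (hμ : (a + 2 * s ^ 2 + 2 * g) * (θ ^ (k + 1) * μ) = 1) :
    ∃ κ' : K, κ' ^ 2 = a + 2 * s ^ 2 + 2 * g ∧ ∃ i : R, (s ^ 2 + g + s * κ') * (θ * i) = 1 := by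
  rcases h.mem_or_exists_mul_eq_one (s ^ 2 + g + s * κ) with hr | hi
  · rcases h.mem_or_exists_mul_eq_one (s ^ 2 + g + s * -κ) with hr' | hi
    · have hX : a + 2 * s ^ 2 + 2 * g ∈ R := by
        convert add_mem (add_mem a.2 hr) hr' using 1
        ring
      refine absurd (isUnit_of_dvd_one ⟨⟨_, hX⟩ * (θ ^ k * μ), Subtype.ext ?_⟩)
        h.irreducible.not_isUnit
      push_cast
      linear_combination -hμ
    · exact ⟨-κ, by rw [hκ]; ring, hi⟩
  · exact ⟨κ, by rw [hκ]; ring, hi⟩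

theorem exists_eq_of_inv_root {a b ε i : R} {k : ℕ} {s g κ : K}
    (hg : g ^ 2 = s ^ 4 + a * s ^ 2 + b) (hκ : κ ^ 2 = a + 2 * s ^ 2 + 2 * g)
    (hs : s ^ 2 * (θ ^ (2 * e + (k + 1)) * ε) = 1) (hi : (s ^ 2 + g + s * κ) * (θ * i) = 1) :
    ∃ ε' : R, θ * i = θ ^ (k + 1) * ε' ∧
      ε' * (1 + a * (θ * i) + b * (θ * i) ^ 2) = ε * (1 - b * (θ * i) ^ 2) ^ 2 := by
  obtain ⟨v, hv⟩ := (h.isUnit_one_add_mul (i * (a + b * (θ * i)))).exists_right_inv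
  have hdup : θ ^ (k + 1) * ε * (1 - b * (θ * i) ^ 2) ^ 2 =
      θ * i * (1 + θ * (i * (a + b * (θ * i)))) := by
    apply Subtype.ext
    push_cast
    have hquad := quadratic_eq_sq_mul_of_halving hg hκ
    have hsub := sq_sub_eq_mul_of_halving hg hκ
    set w : K := θ * i
    set r := s ^ 2 + g + s * κ
    have hκw : 1 + a * w + b * w ^ 2 = κ ^ 2 * w := by
      linear_combination w ^ 2 * hquad - (r * w + 1 + a * w - κ ^ 2 * w) * hi
    have hκs : 1 - b * w ^ 2 = 2 * s * κ * w := by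
      linear_combination w ^ 2 * hsub - (r * w + 1 - 2 * s * κ * w) * hi
    linear_combination θ ^ (k + 1) * ε * (1 - b * w ^ 2 + 2 * s * κ * w) * hκs - w * hκw +
      κ ^ 2 * w ^ 2 * hs -
        θ ^ (k + 1) * ε * s ^ 2 * κ ^ 2 * w ^ 2 * (θ ^ e + 2) * h.coe_pow_eq_two
  refine ⟨ε * (1 - b * (θ * i) ^ 2) ^ 2 * v, ?_, ?_⟩
  · linear_combination -v * hdup - θ * i * hv
  · linear_combination ε * (1 - b * (θ * i) ^ 2) ^ 2 * hv

/- The point is pulled back along a `2`-isogeny and its dual: `a + 2 * s ^ 2 + 2 * g` is the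
`x`-coordinate of the preimage on the curve `y ^ 2 = x * (x ^ 2 - 2 * a * x + (a ^ 2 - 4 * b))`. -/
theorem exists_halving {a b ε : R} {k : ℕ} {x y : K}
    (hE : ∀ x y : K, y ^ 2 = x * (x ^ 2 + a * x + b) → IsSquareMod R θ (2 * e + 1) x → IsSquare x)
    (hE' : ∀ x y : K, y ^ 2 = x * (x ^ 2 - 2 * a * x + (a ^ 2 - 4 * b)) →
      IsSquareMod R θ (2 * e + 1) x → IsSquare x)
    (hx : x * (θ ^ (2 * e + (k + 1)) * ε) = 1) (hy : y ^ 2 = x * (x ^ 2 + a * x + b)) :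
    ∃ x' y' : K, y' ^ 2 = x' * (x' ^ 2 + a * x' + b) ∧
      ∃ ε' : R, x' * (θ ^ (k + 1) * ε') = 1 ∧
        ε' * (1 + a * (θ ^ (k + 1) * ε') + b * (θ ^ (k + 1) * ε') ^ 2) =
          ε * (1 - b * (θ ^ (k + 1) * ε') ^ 2) ^ 2 := by
  have hxsq : IsSquareMod R θ (2 * e + 1) x :=
    (h.isSquareMod_of_mul_eq_one (n := 2 * e + k) hx hy).mono (by lia)
  obtain ⟨s, rfl⟩ := hE x y hy hxsq
  rw [← sq] at hx hy
  obtain ⟨g, hg, μ, hμ⟩ := h.exists_isogenous_inv hx hy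
  obtain ⟨κ₀, hκ₀⟩ := hE' _ (2 * s * (a + 2 * s ^ 2 + 2 * g)) (by
    linear_combination -4 * (a + 2 * s ^ 2 + 2 * g) * hg) (h.isSquareMod_isogenous hg hμ)
  obtain ⟨κ, hκ, i, hi⟩ := h.exists_inv_root hκ₀ hμ
  obtain ⟨ε', hε', hdup⟩ := h.exists_eq_of_inv_root hg hκ hx hi
  refine ⟨s ^ 2 + g + s * κ, κ * (s ^ 2 + g + s * κ), ?_, ε', ?_, ?_⟩
  · linear_combination -(s ^ 2 + g + s * κ) * quadratic_eq_sq_mul_of_halving hg hκ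
  · rw [← hi]
    exact congrArg _ (by exact_mod_cast (congrArg Subtype.val hε').symm)
  · rw [← hε', hdup]

end IsDyadic

end Halving

section Descent

namespace IsDyadic

variable {K : Type*} [Field K] {R : ValuationSubring K} {θ : R}

theorem eq_add_pow_mul_of_duplication {e : ℕ} (h : IsDyadic R θ e) {a b : R} {k n : ℕ}
    {ε₁ ε₂ c₁ c₂ : R}
    (h₁ : ε₁ * (1 + a * (θ ^ (k + 1) * ε₁) + b * (θ ^ (k + 1) * ε₁) ^ 2) =
      (1 - b * (θ ^ (k + 1) * ε₁) ^ 2) ^ 2 + θ ^ n * c₁)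
    (h₂ : ε₂ * (1 + a * (θ ^ (k + 1) * ε₂) + b * (θ ^ (k + 1) * ε₂) ^ 2) =
      (1 - b * (θ ^ (k + 1) * ε₂) ^ 2) ^ 2 + θ ^ n * c₂) :
    ∃ t, ε₁ = ε₂ + θ ^ n * t := by
  obtain ⟨v, hv⟩ := (h.isUnit_one_add_mul (θ ^ k * (a * (ε₁ + ε₂) +
    b * θ ^ (k + 1) * (ε₁ ^ 2 + ε₁ * ε₂ + ε₂ ^ 2) + 2 * b * θ ^ (k + 1) * (ε₁ + ε₂) -
      b ^ 2 * θ ^ (3 * (k + 1)) * (ε₁ + ε₂) * (ε₁ ^ 2 + ε₂ ^ 2)))).exists_right_inv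
  refine ⟨(c₁ - c₂) * v, ?_⟩
  linear_combination v * (h₁ - h₂) - (ε₁ - ε₂) * hv

theorem exists_iterated_halving {e : ℕ} (h : IsDyadic R θ e) {a b : R}
    (hE : ∀ x y : K, y ^ 2 = x * (x ^ 2 + a * x + b) → IsSquareMod R θ (2 * e + 1) x → IsSquare x)
    (hE' : ∀ x y : K, y ^ 2 = x * (x ^ 2 - 2 * a * x + (a ^ 2 - 4 * b)) →
      IsSquareMod R θ (2 * e + 1) x → IsSquare x)
    (k j : ℕ) {x y : K} {c : R} (hy : y ^ 2 = x * (x ^ 2 + a * x + b))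
    (hx : x * (θ ^ (2 * e * (j + 1) + (k + 1)) * (1 + θ ^ (2 * e + 1) * c)) = 1) :
    ∃ x' y' : K, y' ^ 2 = x' * (x' ^ 2 + a * x' + b) ∧
      ∃ ε c' : R, x' * (θ ^ (k + 1) * ε) = 1 ∧
        ε * (1 + a * (θ ^ (k + 1) * ε) + b * (θ ^ (k + 1) * ε) ^ 2) =
          (1 + θ ^ (2 * e + 1) * c') * (1 - b * (θ ^ (k + 1) * ε) ^ 2) ^ 2 := by
  induction j generalizing x y c with
  | zero =>
    obtain ⟨x', y', hy', ε, hx', hε⟩ := h.exists_halving hE hE'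
      (ε := 1 + θ ^ (2 * e + 1) * c) (k := k) (by push_cast; simpa using hx) hy
    exact ⟨x', y', hy', ε, c, hx', hε⟩
  | succ j ih =>
    obtain ⟨x', y', hy', ε, hx', hε⟩ := h.exists_halving hE hE'
      (ε := 1 + θ ^ (2 * e + 1) * c) (k := 2 * e * (j + 1) + k)
      (by push_cast; linear_combination hx) hy
    obtain ⟨t, ht⟩ : ∃ t, θ ^ (2 * e * (j + 1) + k + 1) * ε = θ ^ (2 * e + 1) * t :=
      ⟨θ ^ (2 * e * j + k) * ε, by ring⟩
    rw [ht] at hε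
    refine ih (c := c * (1 - b * (θ ^ (2 * e + 1) * t) ^ 2) ^ 2
      - b * θ ^ (2 * e + 1) * t ^ 2 * (2 - b * (θ ^ (2 * e + 1) * t) ^ 2)
      - ε * (a * t + b * θ ^ (2 * e + 1) * t ^ 2)) hy' ?_
    have hε' : ε = 1 + θ ^ (2 * e + 1) * (c * (1 - b * (θ ^ (2 * e + 1) * t) ^ 2) ^ 2
      - b * θ ^ (2 * e + 1) * t ^ 2 * (2 - b * (θ ^ (2 * e + 1) * t) ^ 2)
      - ε * (a * t + b * θ ^ (2 * e + 1) * t ^ 2)) := by linear_combination hε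
    have hε'K := congrArg Subtype.val hε'
    push_cast at hε'K ⊢
    rw [← hε'K]
    exact hx'

theorem isSquareMod_of_duplication (h : IsDyadic R θ 5) {ε c : R} {x : K}
    (hx : x * (θ ^ 2 * ε) = 1)
    (hε : ε * (1 + -5 * (θ - 1) * (θ ^ 2 * ε) + 5 * (θ - 1) ^ 2 * (θ ^ 2 * ε) ^ 2) =
      (1 + θ ^ 11 * c) * (1 - 5 * (θ - 1) ^ 2 * (θ ^ 2 * ε) ^ 2) ^ 2) :
    IsSquareMod R θ 11 (-(θ ^ 3 + θ ^ 2 - 1) * x) := by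
  have h2 := h.pow_eq_two
  -- `ε₀` solves `hε` with `c = 0` modulo `θ ^ 11`; the solution is unique by Hensel.
  set ε₀ : R := -3 + 2 * θ - θ ^ 2 - θ ^ 3 - θ ^ 4 with hε₀
  have hdup : ε₀ * (1 + -5 * (θ - 1) * (θ ^ 2 * ε₀) + 5 * (θ - 1) ^ 2 * (θ ^ 2 * ε₀) ^ 2) =
      (1 - 5 * (θ - 1) ^ 2 * (θ ^ 2 * ε₀) ^ 2) ^ 2 + θ ^ 11 *
        (12923 + 50746 * θ ^ 2 + 11452 * θ ^ 4 - 39269 * θ - 36109 * θ ^ 3) := by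
    rw [hε₀]
    linear_combination (2 + 53 * θ ^ 3 + 277 * θ ^ 6 + 1254 * θ ^ 8 + 20988 * θ ^ 10
      + 27895 * θ ^ 12 + 6200 * θ ^ 14 + 4500 * θ ^ 16 + 250 * θ ^ 18 + 300 * θ ^ 20 - θ
      - 22 * θ ^ 2 - 32 * θ ^ 4 - 99 * θ ^ 5 - 341 * θ ^ 7 - 6866 * θ ^ 9 - 32530 * θ ^ 11
      - 14355 * θ ^ 13 - 5850 * θ ^ 15 - 1350 * θ ^ 17 - 500 * θ ^ 19 - 25 * θ ^ 23) * h2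
  have hsq : -(θ ^ 3 + θ ^ 2 - 1) * ε₀ * (1 + θ ^ 3 + θ ^ 4) ^ 2 =
      1 + θ ^ 11 * (2 + θ + 7 * θ ^ 2 + 10 * θ ^ 3 + 6 * θ ^ 4) := by
    rw [hε₀]
    linear_combination (2 + 3 * θ ^ 3 + 2 * θ ^ 4 + 3 * θ ^ 7 - θ - θ ^ 2 - 4 * θ ^ 5 - 2 * θ ^ 6
      - 6 * θ ^ 9 - 5 * θ ^ 10) * h2
  obtain ⟨t, ht⟩ := h.eq_add_pow_mul_of_duplication (k := 1) (n := 11) (ε₁ := ε)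
    (c₁ := c * (1 - 5 * (θ - 1) ^ 2 * (θ ^ 2 * ε) ^ 2) ^ 2)
    (by linear_combination hε) hdup
  refine h.isSquareMod_of_eq (z := θ * ε * (1 + θ ^ 3 + θ ^ 4))
    (y := (2 + θ + 7 * θ ^ 2 + 10 * θ ^ 3 + 6 * θ ^ 4) -
      (θ ^ 3 + θ ^ 2 - 1) * t * (1 + θ ^ 3 + θ ^ 4) ^ 2) ?_
  have hε_sq : (-(θ ^ 3 + θ ^ 2 - 1) * (ε * (1 + θ ^ 3 + θ ^ 4) ^ 2) : R) =
      1 + θ ^ 11 * ((2 + θ + 7 * θ ^ 2 + 10 * θ ^ 3 + 6 * θ ^ 4) -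
        (θ ^ 3 + θ ^ 2 - 1) * t * (1 + θ ^ 3 + θ ^ 4) ^ 2) := by
    linear_combination hsq - (θ ^ 3 + θ ^ 2 - 1) * (1 + θ ^ 3 + θ ^ 4) ^ 2 * ht
  calc (-(θ ^ 3 + θ ^ 2 - 1) * x) * (θ * ε * (1 + θ ^ 3 + θ ^ 4)) ^ 2
      = ((-(θ ^ 3 + θ ^ 2 - 1) * (ε * (1 + θ ^ 3 + θ ^ 4) ^ 2) : R) : K) * (x * (θ ^ 2 * ε)) := by
        push_cast; ring
    _ = _ := by rw [hε_sq, hx, mul_one]; push_cast; rfl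

end IsDyadic

end Descent

section FifthRootLocal

variable {K : Type*} [Field K]

/-- For a root `t` of `X ^ 5 - 2`: the units `t - 1` and `t ^ 3 + t ^ 2 - 1`, the torsion unit `-1`,
and the prime `1 + t ^ 2` above `5`. Modulo squares they generate the `5`-units of `ℚ(t)`. -/
def fiveUnits (t : K) : Fin 4 → K := ![t - 1, t ^ 3 + t ^ 2 - 1, -1, 1 + t ^ 2]

/-- The quadratic defects of `fiveUnits` at the prime above `2`. -/
def fiveUnitsDefect : Fin 4 → ℕ := ![1, 3, 5, 10]

theorem fiveUnitsDefect_injective : fiveUnitsDefect.Injective := by decide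

theorem fiveUnitsDefect_lt_eleven : ∀ i, fiveUnitsDefect i < 11 := by decide

namespace IsDyadic

variable {R : ValuationSubring K} {θ : R} (h : IsDyadic R θ 5)

include h

theorem hasDefect_fiveUnits (i : Fin 4) :
    HasDefect R θ (fiveUnitsDefect i) (fiveUnits (θ : K) i) := by
  have h5 := h.coe_pow_eq_two
  fin_cases i
  · refine h.hasDefect_of_eq (.inl (by decide)) (z := 1) (y := -θ ^ 3) ?_
    simp only [fiveUnits, fiveUnitsDefect, Fin.zero_eta, Matrix.cons_val_zero]
    push_cast
    linear_combination h5
  · refine h.hasDefect_of_eq (.inl (by decide)) (z := 1 + θ) (y := 3 + θ ^ 4 - θ ^ 2) ?_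
    simp only [fiveUnits, fiveUnitsDefect, Fin.mk_one, Matrix.cons_val_one, Matrix.cons_val_zero]
    push_cast
    linear_combination (1 + θ - θ ^ 3 : K) * h5
  · refine h.hasDefect_of_eq (.inl (by decide)) (z := 1) (y := -θ ^ 4) ?_
    simp only [fiveUnits, fiveUnitsDefect, Fin.reduceFinMk, Matrix.cons_val]
    push_cast
    linear_combination (1 + θ ^ 5 : K) * h5
  · refine h.hasDefect_of_eq (.inr (by decide))
      (z := 1 - 3 * θ - 3 * θ ^ 2 - 4 * θ ^ 3 - 4 * θ ^ 4)
      (y := 31 + 41 * θ + 29 * θ ^ 2 + 23 * θ ^ 3 + 22 * θ ^ 4) ?_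
    simp only [fiveUnits, fiveUnitsDefect, Fin.reduceFinMk, Matrix.cons_val]
    push_cast
    linear_combination (3 * θ - 2 * θ ^ 2 - 2 * θ ^ 3 - 14 * θ ^ 4 - 29 * θ ^ 5 - 31 * θ ^ 6
      - 41 * θ ^ 7 - 29 * θ ^ 8 - 23 * θ ^ 9 - 22 * θ ^ 10 : K) * h5

theorem isSquare_of_isSquareMod_eleven {x : K} (hx : IsProductModSquares (fiveUnits (θ : K)) x)
    (hx' : IsSquareMod R θ 11 x) : IsSquare x :=
  hx.isSquare_of_isSquareMod fiveUnitsDefect_injective h.hasDefect_fiveUnits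
    fiveUnitsDefect_lt_eleven hx'

theorem hasDefect_seven (k l : R) :
    HasDefect R θ 7 ((θ - 1) * (θ * (3 + 4 * l) - (5 + 8 * k)) : K) := by
  refine h.hasDefect_of_eq (.inl (by decide)) (z := 3 + 3 * θ + θ ^ 2 + 2 * θ ^ 3 + θ ^ 4)
    (y := 3 + 2 * θ + 8 * θ ^ 3 - 10 * θ ^ 2 - 10 * θ ^ 4
      + θ ^ 3 * ((θ - 1) * (l - θ ^ 4 * k) * (3 + 3 * θ + θ ^ 2 + 2 * θ ^ 3 + θ ^ 4) ^ 2)) ?_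
  push_cast
  linear_combination (21 * θ ^ 2 + 2 * θ ^ 4 + 13 * θ ^ 5 + 10 * θ ^ 7 - 22 - 9 * θ
    - 12 * θ ^ 3 - 8 * θ ^ 6 - (θ - 1) * (3 + 3 * θ + θ ^ 2 + 2 * θ ^ 3 + θ ^ 4) ^ 2 *
    (θ * l * (θ ^ 5 + 2) - k * (θ ^ 10 + 2 * θ ^ 5 + 4)) : K) * h.coe_pow_eq_two

theorem isSquareMod_sub_one_mul (k l : R) :
    IsSquareMod R θ 11 ((θ - 1) * (θ * (1 + 4 * l) - (1 + 8 * k)) : K) := by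
  have h5 := h.coe_pow_eq_two
  have hinv : (θ - 1 : K) * (1 + θ + θ ^ 2 + θ ^ 3 + θ ^ 4) = 1 := by linear_combination h5
  refine h.isSquareMod_of_eq (z := 1 + θ + θ ^ 2 + θ ^ 3 + θ ^ 4)
    (y := (l - θ ^ 4 * k) * (1 + θ + θ ^ 2 + θ ^ 3 + θ ^ 4)) ?_
  push_cast
  linear_combination (-(1 + θ + θ ^ 2 + θ ^ 3 + θ ^ 4) *
    (θ * l * (θ ^ 5 + 2) - k * (θ ^ 10 + 2 * θ ^ 5 + 4)) : K) * h5 +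
    (1 + θ + θ ^ 2 + θ ^ 3 + θ ^ 4) * (θ * (1 + 4 * l) - (1 + 8 * k)) * hinv + hinv

/- Halving lowers the level by `10`, and a point of level `2` violates `hsq` because its
`x`-coordinate is determined modulo `θ ^ 11` by the duplication formula. -/
theorem not_exists_point_of_level
    (hE : ∀ x y : K, x ≠ 0 → y ^ 2 = x * (x ^ 2 - 5 * (θ - 1) * x + 5 * (θ - 1) ^ 2) →
      IsProductModSquares (fiveUnits (θ : K)) x)
    (hE' : ∀ x y : K, x ≠ 0 → y ^ 2 = x * (x ^ 2 + 10 * (θ - 1) * x + 5 * (θ - 1) ^ 2) →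
      IsProductModSquares (fiveUnits (θ : K)) x)
    (hsq : ∀ x y : K, x ≠ 0 → y ^ 2 = x * (x ^ 2 - 5 * (θ - 1) * x + 5 * (θ - 1) ^ 2) →
      ¬ IsSquare (-(θ ^ 3 + θ ^ 2 - 1) * x))
    (j : ℕ) {x y : K} {c : R} (hy : y ^ 2 = x * (x ^ 2 - 5 * (θ - 1) * x + 5 * (θ - 1) ^ 2)) :
    x * (θ ^ (10 * (j + 1) + 2) * (1 + θ ^ 11 * c)) ≠ 1 := by
  intro hx
  obtain ⟨x', y', hy', ε, c', hx', hε⟩ := h.exists_iterated_halving (y := y)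
    (a := -5 * (θ - 1)) (b := 5 * (θ - 1) ^ 2)
    (fun x y hxy hx => h.isSquare_of_isSquareMod_eleven (hE x y hx.1 (by
      push_cast at hxy; linear_combination hxy)) hx)
    (fun x y hxy hx => h.isSquare_of_isSquareMod_eleven (hE' x y hx.1 (by
      push_cast at hxy; linear_combination hxy)) hx)
    1 j (by push_cast; linear_combination hy) hx
  have hx0 : x' ≠ 0 := left_ne_zero_of_mul_eq_one hx'
  have hy'' : y' ^ 2 = x' * (x' ^ 2 - 5 * (θ - 1) * x' + 5 * (θ - 1) ^ 2) := by
    push_cast at hy'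
    linear_combination hy'
  have hgen : IsProductModSquares (fiveUnits (θ : K)) (-(θ ^ 3 + θ ^ 2 - 1) * x') := by
    refine .mul ⟨![0, 1, 1, 0], 1, one_ne_zero, ?_⟩ (hE x' y' hx0 hy'')
    simp [fiveUnits, Fin.prod_univ_four]
  exact hsq x' y' hx0 hy'' (h.isSquare_of_isSquareMod_eleven hgen
    (h.isSquareMod_of_duplication hx' hε))

end IsDyadic

end FifthRootLocal

section DyadicPrime

theorem dvd_or_dvd_sub_one_of_card_quotient_eq_two {A : Type*} [CommRing A] {π : A}
    (hcard : Nat.card (A ⧸ Ideal.span {π}) = 2) (x : A) : π ∣ x ∨ π ∣ x - 1 := by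
  have := Nat.finite_of_card_ne_zero (hcard ▸ two_ne_zero)
  have := Finite.one_lt_card_iff_nontrivial.mp (hcard ▸ one_lt_two)
  obtain ⟨y, -, hy⟩ := (Nat.card_eq_two_iff' (0 : A ⧸ Ideal.span {π})).mp hcard
  simp only [← Ideal.mem_span_singleton, ← Ideal.Quotient.eq_zero_iff_mem, map_sub, map_one,
    sub_eq_zero]
  exact or_iff_not_imp_left.mpr fun hx => (hy _ hx).trans (hy 1 one_ne_zero).symm

open IsDedekindDomain.HeightOneSpectrum in
theorem exists_isDyadic {A : Type*} (K : Type*) [CommRing A] [IsDedekindDomain A] [Field K]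
    [Algebra A K] [IsFractionRing A K] {π : A} {e : ℕ} (hπ : Prime π) (hpow : π ^ e = 2)
    (hcard : Nat.card (A ⧸ Ideal.span {π}) = 2) :
    ∃ (R : ValuationSubring K) (θ : R), (θ : K) = algebraMap A K π ∧ IsDyadic R θ e := by
  obtain ⟨v, hv⟩ : ∃ v : IsDedekindDomain.HeightOneSpectrum A, v.asIdeal = Ideal.span {π} :=
    ⟨⟨_, (Ideal.span_singleton_prime hπ.ne_zero).mpr hπ, by simpa using hπ.ne_zero⟩, rfl⟩
  let R := valuationSubringAtPrime K v
  have hDVR : IsDiscreteValuationRing R :=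
    IsLocalization.AtPrime.isDiscreteValuationRing_of_dedekind_domain A v.ne_bot R
  refine ⟨R, algebraMap A R π, rfl, hDVR, ?_, ?_, fun x => ?_⟩
  · rw [IsDiscreteValuationRing.irreducible_iff_uniformizer,
      ← IsLocalization.AtPrime.map_eq_maximalIdeal v.asIdeal R, hv, Ideal.map_span,
      Set.image_singleton]
  · rw [← map_pow, hpow, map_ofNat]
  · obtain ⟨⟨a, s, hs⟩, hx⟩ := IsLocalization.surj v.asIdeal.primeCompl x
    have hs' : ¬ π ∣ s := by rwa [← Ideal.mem_span_singleton, ← hv]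
    obtain ⟨t, ht⟩ := (dvd_or_dvd_sub_one_of_card_quotient_eq_two hcard s).resolve_left hs'
    obtain ⟨u, hu⟩ := (IsLocalization.map_units R (⟨s, hs⟩ : v.asIdeal.primeCompl)).exists_right_inv
    dsimp only at hx hu
    rcases dvd_or_dvd_sub_one_of_card_quotient_eq_two hcard a with ⟨b, rfl⟩ | ⟨b, hb⟩
    · refine .inl ⟨algebraMap A R b * u, ?_⟩
      rw [map_mul] at hx
      linear_combination u * hx - x * hu
    · refine .inr ⟨algebraMap A R (b - t) * u, ?_⟩
      have hst := congrArg (algebraMap A R) ht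
      have hab := congrArg (algebraMap A R) hb
      simp only [map_sub, map_mul, map_one] at hst hab ⊢
      linear_combination u * hx + u * hab - u * hst - (x - 1) * hu

end DyadicPrime

section FifthRootPrime

variable {K : Type*} [Field K] [NumberField K] {θ : 𝓞 K}

theorem exists_isDyadic_of_pow_five_eq_two (hK : finrank ℚ K = 5) (hθ : θ ^ 5 = 2) :
    ∃ (R : ValuationSubring K) (τ : R), (τ : K) = θ ∧ IsDyadic R τ 5 := by
  have hnorm := norm_fifthRoot hK hθ
  refine exists_isDyadic K (prime_of_prime_norm ?_) hθ ?_
  · rw [hnorm]; exact Nat.prime_two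
  · have := Ideal.absNorm_span_singleton θ
    rw [hnorm] at this
    exact this

end FifthRootPrime

section Quartic

theorem sq_eq_cubic_of_quartic_points {K : Type*} [CommRing K]
    {a₀ a₁ a₂ a₃ a₄ t t₀ V V₀ f f₀ A B G : K}
    (hf : f = a₄ * t ^ 4 + a₃ * t ^ 3 + a₂ * t ^ 2 + a₁ * t + a₀)
    (hf₀ : f₀ = a₄ * t₀ ^ 4 + a₃ * t₀ ^ 3 + a₂ * t₀ ^ 2 + a₁ * t₀ + a₀)
    (hV : V ^ 2 = f) (hV₀ : V₀ ^ 2 = f₀)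
    (hA : A = 4 * f₀ + (4 * a₄ * t₀ ^ 3 + 3 * a₃ * t₀ ^ 2 + 2 * a₂ * t₀ + a₁) * (t - t₀))
    (hB : B = 4 * f - (4 * a₄ * t ^ 3 + 3 * a₃ * t ^ 2 + 2 * a₂ * t + a₁) * (t - t₀))
    (hG : G = 2 * V * V₀ + (2 * a₄ * t ^ 2 * t₀ ^ 2 + a₃ * t * t₀ * (t + t₀) + 2 * a₂ * t * t₀ +
      a₁ * (t + t₀) + 2 * a₀)) :
    (V * A + V₀ * B) ^ 2 = G ^ 3 + a₂ * (t - t₀) ^ 2 * G ^ 2 +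
      (a₁ * a₃ - 4 * a₀ * a₄) * (t - t₀) ^ 4 * G +
        (a₀ * a₃ ^ 2 + a₁ ^ 2 * a₄ - 4 * a₀ * a₂ * a₄) * (t - t₀) ^ 6 := by
  obtain ⟨F, hF⟩ : ∃ F, F = 2 * a₄ * t ^ 2 * t₀ ^ 2 + a₃ * t * t₀ * (t + t₀) + 2 * a₂ * t * t₀ +
    a₁ * (t + t₀) + 2 * a₀ := ⟨_, rfl⟩
  rw [← hF] at hG
  have hrational : f * A ^ 2 + f₀ * B ^ 2 = 12 * f * f₀ * F + F ^ 3 +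
      a₂ * (t - t₀) ^ 2 * (4 * f * f₀ + F ^ 2) + (a₁ * a₃ - 4 * a₀ * a₄) * (t - t₀) ^ 4 * F +
        (a₀ * a₃ ^ 2 + a₁ ^ 2 * a₄ - 4 * a₀ * a₂ * a₄) * (t - t₀) ^ 6 := by
    rw [hA, hB, hF, hf, hf₀]; ring
  have hirrational : A * B = 4 * f * f₀ + 3 * F ^ 2 + 2 * a₂ * (t - t₀) ^ 2 * F +
      (a₁ * a₃ - 4 * a₀ * a₄) * (t - t₀) ^ 4 := by
    rw [hA, hB, hF, hf, hf₀]; ring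
  have hVV₀ : (V * V₀) ^ 2 = f * f₀ := by rw [mul_pow, hV, hV₀]
  rw [hG]
  linear_combination A ^ 2 * hV + B ^ 2 * hV₀ + hrational + 2 * V * V₀ * hirrational -
    (8 * V * V₀ + 12 * F + 4 * a₂ * (t - t₀) ^ 2) * hVV₀

/- `(x, y)` is the difference of the two points, viewed on the Jacobian of the quartic. -/
theorem exists_cubic_point_of_quartic_points {K : Type*} [Field K] {a₀ a₁ a₂ a₃ a₄ t t₀ V V₀ : K}
    (ht : t - t₀ ≠ 0) (hV : V ^ 2 = a₄ * t ^ 4 + a₃ * t ^ 3 + a₂ * t ^ 2 + a₁ * t + a₀)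
    (hV₀ : V₀ ^ 2 = a₄ * t₀ ^ 4 + a₃ * t₀ ^ 3 + a₂ * t₀ ^ 2 + a₁ * t₀ + a₀) :
    ∃ x y : K, x * (t - t₀) ^ 2 = 2 * V * V₀ + (2 * a₄ * t ^ 2 * t₀ ^ 2 + a₃ * t * t₀ * (t + t₀)
      + 2 * a₂ * t * t₀ + a₁ * (t + t₀) + 2 * a₀) ∧
      y ^ 2 = x ^ 3 + a₂ * x ^ 2 + (a₁ * a₃ - 4 * a₀ * a₄) * x +
        (a₀ * a₃ ^ 2 + a₁ ^ 2 * a₄ - 4 * a₀ * a₂ * a₄) := by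
  have hsq := sq_eq_cubic_of_quartic_points rfl rfl hV hV₀ rfl rfl rfl
  set A := 4 * (a₄ * t₀ ^ 4 + a₃ * t₀ ^ 3 + a₂ * t₀ ^ 2 + a₁ * t₀ + a₀) +
    (4 * a₄ * t₀ ^ 3 + 3 * a₃ * t₀ ^ 2 + 2 * a₂ * t₀ + a₁) * (t - t₀)
  set B := 4 * (a₄ * t ^ 4 + a₃ * t ^ 3 + a₂ * t ^ 2 + a₁ * t + a₀) -
    (4 * a₄ * t ^ 3 + 3 * a₃ * t ^ 2 + 2 * a₂ * t + a₁) * (t - t₀)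
  set G := 2 * V * V₀ + (2 * a₄ * t ^ 2 * t₀ ^ 2 + a₃ * t * t₀ * (t + t₀) + 2 * a₂ * t * t₀ +
    a₁ * (t + t₀) + 2 * a₀)
  refine ⟨G / (t - t₀) ^ 2, (V * A + V₀ * B) / (t - t₀) ^ 3, by field_simp, ?_⟩
  rw [div_pow, hsq]
  field_simp

/- The shift by `2 * d` moves the `2`-torsion point of the Jacobian to the origin. -/
theorem exists_weierstrass_point {K : Type*} [Field K] {d t t₀ V V₀ : K} (ht : t - t₀ ≠ 0)
    (hV : V ^ 2 = d * (t ^ 4 + t ^ 3 + t ^ 2 + t + 1))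
    (hV₀ : V₀ ^ 2 = d * (t₀ ^ 4 + t₀ ^ 3 + t₀ ^ 2 + t₀ + 1)) :
    ∃ x y : K, x * (t - t₀) ^ 2 = 2 * V * V₀ + d * (2 * t ^ 2 * t₀ ^ 2 + t * t₀ * (t + t₀)
      + 2 * (t ^ 2 + t₀ ^ 2) - 2 * t * t₀ + (t + t₀) + 2) ∧
      y ^ 2 = x * (x ^ 2 - 5 * d * x + 5 * d ^ 2) := by
  obtain ⟨x, y, hx, hy⟩ := exists_cubic_point_of_quartic_points (a₀ := d) (a₁ := d) (a₂ := d)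
    (a₃ := d) (a₄ := d) ht (by rw [hV]; ring) (by rw [hV₀]; ring)
  exact ⟨x + 2 * d, y, by rw [add_mul, hx]; ring, by rw [hy]; ring⟩

end Quartic

section NearbyPoints

namespace IsDyadic

variable {K : Type*} [Field K] {R : ValuationSubring K} {θ : R} {e : ℕ} (h : IsDyadic R θ e)

include h

theorem exists_sign_mul_eq {m : ℕ} {V : K} {V₀ y : R} (hV₀ : IsUnit V₀)
    (hV : V ^ 2 = V₀ ^ 2 + (θ : K) ^ (2 * e + m) * y) :
    ∃ σ : K, σ ^ 2 = 1 ∧ ∃ f : R, σ * V = V₀ * (1 + θ ^ (e + m) * f) := by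
  obtain ⟨i, hi⟩ := hV₀.exists_right_inv
  have hiK : (V₀ * i : K) = 1 := congrArg Subtype.val hi
  have hVi : (V * i) ^ 2 = 1 + (θ : K) ^ (2 * e + m) * (y * i ^ 2 : R) := by
    push_cast
    linear_combination (i : K) ^ 2 * hV + (V₀ * i + 1 : K) * hiK
  obtain ⟨f, hf | hf⟩ := h.eq_one_add_or_eq_neg_of_sq_eq hVi
  · exact ⟨1, one_pow 2, f, by linear_combination V₀ * hf - V * hiK⟩
  · exact ⟨-1, neg_one_sq, f, by linear_combination -V₀ * hf + V * hiK⟩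

theorem exists_weierstrass_point_of_nearby {m : ℕ} {d t₀ V₀ w : R} {V : K} (hV₀ : IsUnit V₀)
    (hw : w ≠ 0) (hq₀ : V₀ ^ 2 = d * (t₀ ^ 4 + t₀ ^ 3 + t₀ ^ 2 + t₀ + 1)) {t : R}
    (ht : t = t₀ + θ ^ (2 * e + m) * w)
    (hq : V ^ 2 = (d * (t ^ 4 + t ^ 3 + t ^ 2 + t + 1) : R)) :
    ∃ x y : K, y ^ 2 = x * (x ^ 2 - 5 * d * x + 5 * d ^ 2) ∧ ∃ f : R,
      x * (θ ^ (2 * e + m) * w) ^ 2 = 4 * V₀ ^ 2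
        + 2 * d * (4 * t₀ ^ 3 + 3 * t₀ ^ 2 + 2 * t₀ + 1) * (θ ^ (2 * e + m) * w)
        + (θ ^ (2 * e + m) * w) ^ 2 * d * (8 * t₀ ^ 2 + 4 * t₀ + 3
          + (4 * t₀ + 1) * (θ ^ (2 * e + m) * w) + (θ ^ (2 * e + m) * w) ^ 2)
        - (V₀ * (θ ^ (e + m) * f)) ^ 2 := by
  have hq₀K : (V₀ ^ 2 : K) = d * (t₀ ^ 4 + t₀ ^ 3 + t₀ ^ 2 + t₀ + 1) := congrArg Subtype.val hq₀
  have htK : (t - t₀ : K) = θ ^ (2 * e + m) * w := by rw [ht]; push_cast; ring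
  push_cast at hq
  obtain ⟨σ, hσ, f, hf⟩ := h.exists_sign_mul_eq (m := m) (V := V) hV₀
    (y := w * d * ((4 * t₀ ^ 3 + 3 * t₀ ^ 2 + 2 * t₀ + 1) + (6 * t₀ ^ 2 + 3 * t₀ + 1) * (t - t₀)
      + (4 * t₀ + 1) * (t - t₀) ^ 2 + (t - t₀) ^ 3)) (by
    push_cast
    rw [← mul_assoc, ← mul_assoc, ← htK]
    linear_combination hq - hq₀K)
  obtain ⟨x, y, hx, hy⟩ := exists_weierstrass_point (t := (t : K)) (t₀ := t₀) (V := σ * V)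
    (V₀ := V₀) (by rw [htK]; exact mul_ne_zero (pow_ne_zero _ h.coe_ne_zero) (mod_cast hw))
    (by rw [mul_pow, hσ, one_mul, hq]) hq₀K
  refine ⟨x, y, hy, f, ?_⟩
  rw [← htK, hx]
  linear_combination V ^ 2 * hσ + hq - 3 * hq₀K - (σ * V - V₀ + V₀ * (θ ^ (e + m) * f)) * hf

theorem exists_level_point (n : ℕ) {d t₀ V₀ v w w' t : R} {V : K}
    (hq₀ : V₀ ^ 2 = d * (t₀ ^ 4 + t₀ ^ 3 + t₀ ^ 2 + t₀ + 1))
    (hv : V₀ ^ 2 = 1 + θ ^ (2 * e + 1) * v) (hw : w ^ 2 = 1 + θ ^ (2 * e + 1) * w')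
    (ht : t = t₀ + θ ^ (e * (n + 3) + 1) * w)
    (hq : V ^ 2 = (d * (t ^ 4 + t ^ 3 + t ^ 2 + t + 1) : R)) :
    ∃ x y : K, y ^ 2 = x * (x ^ 2 - 5 * d * x + 5 * d ^ 2) ∧
      ∃ c : R, x * (θ ^ (2 * e * (n + 2) + 2) * (1 + θ ^ (2 * e + 1) * c)) = 1 := by
  have hV₀ : IsUnit V₀ := by
    rw [← isUnit_pow_iff two_ne_zero, hv, pow_succ', mul_assoc]
    exact h.isUnit_one_add_mul _
  have hw0 : w ≠ 0 := by
    rintro rfl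
    refine (h.isUnit_one_add_mul (θ ^ (2 * e) * w')).ne_zero ?_
    linear_combination -hw
  have hexp : e * (n + 3) + 1 = 2 * e + (e * n + e + 1) := by ring
  rw [hexp] at ht
  obtain ⟨x, y, hy, f, hx⟩ := h.exists_weierstrass_point_of_nearby hV₀ hw0 hq₀ ht hq
  obtain ⟨k, hk⟩ : ∃ k : R, x * θ ^ (2 * e * (n + 2) + 2) * w ^ 2 = 1 + θ ^ (2 * e + 1) * k := by
    refine ⟨v + d * (4 * t₀ ^ 3 + 3 * t₀ ^ 2 + 2 * t₀ + 1) * θ ^ (e * n) * w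
      + θ ^ (2 * e * n + 2 * e + 1) * w ^ 2 * d * (8 * t₀ ^ 2 + 4 * t₀ + 3
        + (4 * t₀ + 1) * (θ ^ (2 * e + (e * n + e + 1)) * w)
        + (θ ^ (2 * e + (e * n + e + 1)) * w) ^ 2)
      - V₀ ^ 2 * θ ^ (2 * e * n + 1) * f ^ 2, ?_⟩
    have hvK : (V₀ ^ 2 : K) = 1 + θ ^ (2 * e + 1) * v := congrArg Subtype.val hv
    refine mul_left_cancel₀ (pow_ne_zero (2 * e) h.coe_ne_zero) ?_
    push_cast
    linear_combination hx + θ ^ (2 * e) * hvK - (V₀ ^ 2 * (θ ^ e + 2)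
      + d * (4 * t₀ ^ 3 + 3 * t₀ ^ 2 + 2 * t₀ + 1) * (θ ^ (2 * e + (e * n + e + 1)) * w)) *
        h.coe_pow_eq_two
  obtain ⟨k', hk'⟩ := h.exists_inv_one_add_pow_mul (2 * e) k
  have hwK : (w ^ 2 : K) = 1 + θ ^ (2 * e + 1) * w' := congrArg Subtype.val hw
  refine ⟨x, y, hy, w' + k' + θ ^ (2 * e + 1) * w' * k', ?_⟩
  push_cast
  linear_combination (1 + θ ^ (2 * e + 1) * k' : K) * hk + hk' -
    x * θ ^ (2 * e * (n + 2) + 2) * (1 + θ ^ (2 * e + 1) * k') * hwK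

theorem exists_eq_div_and_sq_eq {o k : ℤ} (ho : Odd o) (hk : Odd k) :
    ∃ w w' : R, w * k = o ∧ w ^ 2 = 1 + θ ^ (2 * e + 1) * w' := by
  obtain ⟨s, hs⟩ : (8 : ℤ) ∣ o ^ 2 - k ^ 2 := by
    have h1 := Int.eight_dvd_sq_sub_one_of_odd ho
    have h2 := Int.eight_dvd_sq_sub_one_of_odd hk
    lia
  have hs' : (o ^ 2 - k ^ 2 : R) = 2 ^ 3 * s := by
    rw [← Int.cast_pow, ← Int.cast_pow, ← Int.cast_sub, hs]
    push_cast
    ring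
  obtain ⟨p, hp⟩ := h.dvd_two
  obtain ⟨z, hz⟩ : ∃ z : R, k * z = 1 := by
    obtain ⟨r, rfl⟩ := hk
    refine (?_ : IsUnit _).exists_right_inv
    convert h.isUnit_one_add_mul (p * r) using 1
    push_cast
    linear_combination r * hp
  refine ⟨o * z, p * s * z ^ 2, by linear_combination o * hz, ?_⟩
  linear_combination z ^ 2 * hs' + (k * z + 1) * hz + 4 * s * z ^ 2 * hp -
    p * s * z ^ 2 * θ * (θ ^ e + 2) * h.pow_eq_two

end IsDyadic

end NearbyPoints

section SquareClassesOfIntegers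

theorem exists_eq_unit_mul_pow_mul_sq {A : Type*} [CommRing A] [IsDomain A]
    [IsPrincipalIdealRing A] {π m q w : A} (hπ : Prime π) (hm : m ≠ 0) (hmq : m * q = w ^ 2)
    (hp : ∀ p, Prime p → p ∣ m → p ∣ q → π ∣ p) :
    ∃ (ε : Aˣ) (k : ℕ) (d : A), m = ε * π ^ k * d ^ 2 := by
  obtain ⟨n, hn, hπn⟩ := (FiniteMultiplicity.of_prime_left hπ hm).exists_eq_pow_mul_and_not_dvd
  generalize multiplicity π m = k at hn
  have hcop : IsCoprime n (π ^ k * q) := by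
    refine isCoprime_of_prime_dvd (fun h => hπn (h.1 ▸ dvd_zero π)) fun p hpr hpn hpq => ?_
    rcases hpr.dvd_or_dvd hpq with h | h
    · exact hπn ((hpr.associated_of_dvd hπ (hpr.dvd_of_dvd_pow h)).symm.dvd.trans hpn)
    · exact hπn ((hp p hpr (hn ▸ hpn.mul_left _) h).trans hpn)
  obtain ⟨d, ε, hε⟩ := exists_associated_pow_of_mul_eq_pow' hcop (c := w) (k := 2) (by
    rw [← hmq, hn]; ring)
  exact ⟨ε, k, d, by rw [hn, ← hε]; ring⟩

theorem exists_reduced_fraction_of_sq_eq {A K : Type*} [CommRing A] [IsDomain A]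
    [UniqueFactorizationMonoid A] [Field K] [Algebra A K] [IsFractionRing A K] {a b : A} {x y : K}
    (hx : x ≠ 0) (hy : y ^ 2 = x * (x ^ 2 + algebraMap A K a * x + algebraMap A K b)) :
    ∃ m n q w : A, m ≠ 0 ∧ n ≠ 0 ∧ x = algebraMap A K m / algebraMap A K n ∧
      m * n * q = w ^ 2 ∧ ∀ p, Prime p → p ∣ m * n → p ∣ q → p ∣ b := by
  obtain ⟨m, ⟨n, hn⟩, hmn, rfl⟩ := IsFractionRing.exists_reduced_fraction (A := A) x
  have hn0 : n ≠ 0 := nonZeroDivisors.ne_zero hn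
  have hnK : algebraMap A K n ≠ 0 := by simpa using hn0
  rw [IsFractionRing.mk'_eq_div] at hx hy ⊢
  have hm0 : m ≠ 0 := by rintro rfl; simp at hx
  have hsq : (y * algebraMap A K n ^ 2) ^ 2 =
      algebraMap A K (m * n * (m ^ 2 + a * (m * n) + b * n ^ 2)) := by
    rw [mul_pow, hy]
    simp only [map_mul, map_add, map_pow]
    field_simp
  obtain ⟨w, hw⟩ := IsIntegrallyClosed.exists_algebraMap_eq_of_isIntegral_pow (R := A)
    two_pos (hsq ▸ isIntegral_algebraMap)
  refine ⟨m, n, m ^ 2 + a * (m * n) + b * n ^ 2, w, hm0, hn0, rfl, ?_, fun p hp hpm hpq => ?_⟩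
  · rw [← hw, ← map_pow] at hsq
    exact (IsFractionRing.injective A K hsq).symm
  have hpmn : p ∣ m ^ 2 + b * n ^ 2 := by
    convert hpq.sub (hpm.mul_left a) using 1; ring
  rcases hp.dvd_or_dvd hpm with h | h
  · rcases hp.dvd_or_dvd ((dvd_add_right (h.pow two_ne_zero)).mp hpmn) with h' | h'
    · exact h'
    · exact absurd (hmn h (hp.dvd_of_dvd_pow h')) hp.not_isUnit
  · have hpm2 := (dvd_add_left ((h.pow two_ne_zero).mul_left _)).mp hpmn
    exact absurd (hmn (hp.dvd_of_dvd_pow hpm2) h) hp.not_isUnit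

end SquareClassesOfIntegers

section UnitsModSquares

variable {K : Type*} [Field K] [NumberField K]

/- Units modulo squares embed into the torsion times `(ℤ/2) ^ rank`, so a set of representatives
of inequivalent classes that is as large as this group is complete. -/
theorem exists_unit_eq_mul_sq {ι : Type*} {F : ι → (𝓞 K)ˣ}
    (hF : ∀ i j, IsSquare (F i * F j) → i = j)
    (hcard : Units.torsionOrder K * 2 ^ Units.rank K ≤ Nat.card ι) (ε : (𝓞 K)ˣ) :
    ∃ i η, ε = F i * η ^ 2 := by
  choose e he using fun x : (𝓞 K)ˣ => (Units.exist_unique_eq_mul_prod K x).exists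
  let g (x : (𝓞 K)ˣ) : Units.torsion K × (Fin (Units.rank K) → ZMod 2) :=
    ((e x).1, fun i => (e x).2 i)
  have hg {x y : (𝓞 K)ˣ} (hxy : g x = g y) : IsSquare (x * y) := by
    have htors : (e x).1 = (e y).1 := (Prod.mk.inj hxy).1
    have heven (i) : Even ((e x).2 i + (e y).2 i) := by
      have hi : (((e x).2 i : ℤ) : ZMod 2) = (e y).2 i := congrFun (Prod.mk.inj hxy).2 i
      rw [ZMod.intCast_eq_intCast_iff_dvd_sub] at hi
      push_cast at hi
      grind
    rw [he x, he y, htors, mul_mul_mul_comm, ← Finset.prod_mul_distrib]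
    refine .mul ⟨_, rfl⟩ (Finset.isSquare_prod _ fun i _ => ?_)
    rw [← zpow_add]
    exact (heven i).isSquare_zpow _
  have hinj : Function.Injective (g ∘ F) := fun i j hij => hF i j (hg hij)
  obtain ⟨i, hi⟩ := (hinj.bijective_of_nat_card_le (by
    simpa [Nat.card_prod, Units.torsionOrder] using hcard)).surjective (g ε)
  obtain ⟨η, hη⟩ := hg hi
  refine ⟨i, η * (F i)⁻¹, ?_⟩
  rw [mul_pow, sq η, ← hη, inv_pow, sq (F i)]
  simp [mul_assoc, mul_left_comm, mul_comm]

theorem exists_unit_eq_prod_pow_mul_sq {ι : Type*} [Fintype ι] {g : ι → (𝓞 K)ˣ}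
    (hg : ∀ a : ι → ℕ, IsSquare (∏ i, g i ^ a i) → ∀ i, Even (a i))
    (hcard : Units.torsionOrder K * 2 ^ Units.rank K ≤ 2 ^ Fintype.card ι) (ε : (𝓞 K)ˣ) :
    ∃ (a : ι → ℕ) (η : (𝓞 K)ˣ), ε = (∏ i, g i ^ a i) * η ^ 2 := by
  classical
  let F (a : ι → Fin 2) : (𝓞 K)ˣ := ∏ i, g i ^ (a i : ℕ)
  have hF (a b) (hab : IsSquare (F a * F b)) : a = b := by
    simp only [F, ← Finset.prod_mul_distrib, ← pow_add] at hab
    refine funext fun i => Fin.ext ?_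
    have heven := Nat.even_iff.mp (hg _ hab i)
    lia
  obtain ⟨a, η, hη⟩ :=
    exists_unit_eq_mul_sq hF (by simpa [Nat.card_eq_fintype_card] using hcard) ε
  exact ⟨fun i => a i, η, hη⟩

end UnitsModSquares

section FifthRootUnits

variable {A : Type*} [CommRing A] {θ : A}

theorem isUnit_fifthRoot_sub_one (hθ : θ ^ 5 = 2) : IsUnit (θ - 1) :=
  .of_mul_eq_one (1 + θ + θ ^ 2 + θ ^ 3 + θ ^ 4) (by linear_combination hθ)

theorem isUnit_fifthRoot_cube_add_sq_sub_one (hθ : θ ^ 5 = 2) : IsUnit (θ ^ 3 + θ ^ 2 - 1) :=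
  .of_mul_eq_one (-1 + θ ^ 2 - θ ^ 3 + θ ^ 4) (by linear_combination θ ^ 2 * hθ)

theorem associated_five_fifthRoot (hθ : θ ^ 5 = 2) : Associated ((1 + θ ^ 2) ^ 5) 5 := by
  have hinv : (-3 - 6 * θ - θ ^ 2 + 4 * θ ^ 3 + 3 * θ ^ 4) *
      (1 + 4 * θ + θ ^ 2 + 2 * θ ^ 3 + 2 * θ ^ 4) = 1 := by
    linear_combination (2 + 9 * θ + 14 * θ ^ 2 + 6 * θ ^ 3) * hθ
  refine ⟨.mkOfMulEqOne _ _ hinv, ?_⟩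
  rw [Units.val_mkOfMulEqOne]
  linear_combination -(-4 - 3 * θ - 8 * θ ^ 2 - 13 * θ ^ 3 - 16 * θ ^ 4
    - 22 * θ ^ 5 - 14 * θ ^ 6 - 14 * θ ^ 7 - 4 * θ ^ 8 - 3 * θ ^ 9) * hθ

end FifthRootUnits

section FifthRootGlobal

variable {K : Type*} [Field K] [NumberField K] {θ : 𝓞 K}

theorem isProductModSquares_unit (hK : finrank ℚ K = 5) (hθ : θ ^ 5 = 2) (ε : (𝓞 K)ˣ) :
    IsProductModSquares (fiveUnits (θ : K)) (ε : 𝓞 K) := by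
  obtain ⟨R, τ, hτ, h⟩ := exists_isDyadic_of_pow_five_eq_two hK hθ
  obtain ⟨u₁, hu₁⟩ := isUnit_fifthRoot_sub_one hθ
  obtain ⟨u₂, hu₂⟩ := isUnit_fifthRoot_cube_add_sq_sub_one hθ
  let g : Fin 3 → (𝓞 K)ˣ := ![u₁, u₂, -1]
  let φ : (𝓞 K)ˣ →* K := (algebraMap (𝓞 K) K : 𝓞 K →* K).comp (Units.coeHom (𝓞 K))
  have hg (i) : φ (g i) = fiveUnits (θ : K) i.castSucc := by
    fin_cases i <;> simp [φ, g, fiveUnits, hu₁, hu₂]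
  obtain ⟨a, η, rfl⟩ := exists_unit_eq_prod_pow_mul_sq (g := g) (fun a ha i => by
    refine even_of_isSquare_prod (R := R) (θ := τ)
      (fiveUnitsDefect_injective.comp (Fin.castSucc_injective 3))
      (fun i => h.hasDefect_fiveUnits i.castSucc) (a := a) ?_ i
    simpa [hg, hτ] using ha.map φ) (by
      rw [Units.torsionOrder_eq_two_of_odd_finrank (by rw [hK]; decide), unitsRank_eq_two hK hθ]
      simp) ε
  refine ⟨![a 0, a 1, a 2, 0], φ η, by simp [φ], ?_⟩
  simp [fiveUnits, Fin.prod_univ_three, Fin.prod_univ_four, φ, g, hu₁, hu₂]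

theorem isProductModSquares_of_mul_eq_sq (hK : finrank ℚ K = 5) (hθ : θ ^ 5 = 2)
    {m q w : 𝓞 K} (hm : m ≠ 0) (hmq : m * q = w ^ 2)
    (hp : ∀ p : 𝓞 K, Prime p → p ∣ m → p ∣ q → p ∣ 5) :
    IsProductModSquares (fiveUnits (θ : K)) m := by
  have := isPrincipalIdealRing_of_pow_five_eq_two hK hθ
  have hπ : Prime (1 + θ ^ 2) := prime_of_prime_norm (by
    rw [norm_one_add_fifthRoot_sq hK hθ]; exact Nat.prime_five)
  obtain ⟨ε, k, d, rfl⟩ := exists_eq_unit_mul_pow_mul_sq hπ hm hmq fun p hpr hpm hpq => by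
    have hdvd := hpr.dvd_of_dvd_pow ((associated_five_fifthRoot hθ).dvd_iff_dvd_right.mpr
      (hp p hpr hpm hpq))
    exact (hpr.associated_of_dvd hπ hdvd).symm.dvd
  have hd : (d : K) ≠ 0 := by
    rw [RingOfIntegers.coe_ne_zero_iff]
    rintro rfl
    simp at hm
  have hπd : IsProductModSquares (fiveUnits (θ : K)) ((1 + θ ^ 2) ^ k * d ^ 2 : K) :=
    ⟨![0, 0, 0, k], d, hd, by simp [fiveUnits, Fin.prod_univ_four]⟩
  convert (isProductModSquares_unit hK hθ ε).mul hπd using 1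
  push_cast
  ring

theorem isProductModSquares_of_sq_eq (hK : finrank ℚ K = 5) (hθ : θ ^ 5 = 2)
    {a d : 𝓞 K} (hd : IsUnit d) {x y : K} (hx : x ≠ 0)
    (hy : y ^ 2 = x * (x ^ 2 + a * x + 5 * d ^ 2)) :
    IsProductModSquares (fiveUnits (θ : K)) x := by
  have := isPrincipalIdealRing_of_pow_five_eq_two hK hθ
  obtain ⟨m, n, q, w, hm, hn, rfl, hw, hp⟩ :=
    exists_reduced_fraction_of_sq_eq (a := a) (b := 5 * d ^ 2) hx (by simpa [map_ofNat] using hy)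
  have hnK : (n : K) ≠ 0 := by exact_mod_cast hn
  have hmn := isProductModSquares_of_mul_eq_sq hK hθ (mul_ne_zero hm hn) hw
    fun p hpr hpm hpq => (hd.pow 2).dvd_mul_right.mp (hp p hpr hpm hpq)
  convert hmn.mul (.of_sq _ (inv_ne_zero hnK)) using 1
  push_cast
  field_simp

theorem exists_ringHom_real_one_lt (hK : finrank ℚ K = 5) (hθ : θ ^ 5 = 2) :
    ∃ φ : K →+* ℝ, 1 < φ θ := by
  classical
  obtain ⟨w, hw⟩ := Fintype.card_pos_iff.mp
    (InfinitePlace.nrRealPlaces_pos_of_odd_finrank (K := K) (by rw [hK]; decide))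
  refine ⟨InfinitePlace.embedding_of_isReal hw, ?_⟩
  have h5 : InfinitePlace.embedding_of_isReal hw θ ^ 5 = 2 := by
    rw [← map_pow, ← map_pow, hθ, map_ofNat, map_ofNat]
  rw [← Odd.pow_lt_pow (n := 5) (by decide), h5]
  norm_num

theorem pos_of_sq_eq {d x y : ℝ} (hd : 0 ≤ d) (hx : x ≠ 0)
    (hy : y ^ 2 = x * (x ^ 2 - 5 * d * x + 5 * d ^ 2)) : 0 < x := by
  by_contra! hle
  have hneg : x < 0 := lt_of_le_of_ne hle hx
  have hpos : 0 < x ^ 2 - 5 * d * x + 5 * d ^ 2 := by nlinarith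
  nlinarith [sq_nonneg y]

theorem not_isSquare_of_sq_eq (hK : finrank ℚ K = 5) (hθ : θ ^ 5 = 2) {x y : K} (hx : x ≠ 0)
    (hy : y ^ 2 = x * (x ^ 2 - 5 * (θ - 1) * x + 5 * (θ - 1) ^ 2)) :
    ¬ IsSquare (-(θ ^ 3 + θ ^ 2 - 1) * x : K) := by
  obtain ⟨φ, hφ⟩ := exists_ringHom_real_one_lt hK hθ
  have hφx : 0 < φ x := pos_of_sq_eq (d := φ θ - 1) (y := φ y) (by linarith)
    ((map_ne_zero φ).mpr hx) (by simpa [map_ofNat] using congrArg φ hy)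
  have hφu : 0 < φ θ ^ 3 + φ θ ^ 2 - 1 := by
    linarith [one_lt_pow₀ hφ (n := 2) (by norm_num), pow_pos (one_pos.trans hφ) 3]
  intro hs
  have hnonneg := (hs.map φ).nonneg
  simp only [map_pow, map_mul, map_sub, map_add, map_neg, map_one] at hnonneg
  linarith [mul_pos hφu hφx]

variable {R : ValuationSubring K} {τ : R}

theorem IsDyadic.not_exists_point (h : IsDyadic R τ 5) (hK : finrank ℚ K = 5) (hθ : θ ^ 5 = 2)
    (hτ : (τ : K) = θ) (j : ℕ) {x y : K} {c : R}
    (hy : y ^ 2 = x * (x ^ 2 - 5 * (τ - 1) * x + 5 * (τ - 1) ^ 2)) :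
    x * (τ ^ (10 * (j + 1) + 2) * (1 + τ ^ 11 * c)) ≠ 1 := by
  have hd := isUnit_fifthRoot_sub_one hθ
  refine h.not_exists_point_of_level (fun x y hx hy => ?_) (fun x y hx hy => ?_)
    (fun x y hx hy => ?_) j hy <;> rw [hτ] at hy ⊢
  · refine isProductModSquares_of_sq_eq hK hθ (a := -5 * (θ - 1)) hd hx (y := y) ?_
    simp only [map_mul, map_sub, map_neg, map_ofNat, map_one]
    linear_combination hy
  · refine isProductModSquares_of_sq_eq hK hθ (a := 10 * (θ - 1)) hd hx (y := y) ?_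
    simp only [map_mul, map_sub, map_ofNat, map_one]
    linear_combination hy
  · exact not_isSquare_of_sq_eq hK hθ hx hy

end FifthRootGlobal

section Integers

variable {a b c : ℤ}

theorem odd_of_two_mul_pow_five_sub_eq_sq (hc : Odd c) (habc : 2 * b ^ 5 - c ^ 5 = a ^ 2) :
    Odd a := by
  have hodd : Odd (2 * b ^ 5 - c ^ 5) := (even_two_mul _).sub_odd hc.pow
  rwa [habc, Int.odd_pow' two_ne_zero] at hodd

theorem emod_cases_of_two_mul_pow_five_sub_eq_sq (hb : Odd b) (hc : Odd c)
    (habc : 2 * b ^ 5 - c ^ 5 = a ^ 2) :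
    (b % 4 = 3 ∧ c % 8 = 5) ∨ (b % 4 = 1 ∧ c % 8 = 1) := by
  have hpow {x : ℤ} (hx : Odd x) : x ^ 5 ≡ x [ZMOD 8] := by
    have hx2 : x ^ 2 ≡ 1 [ZMOD 8] :=
      (Int.modEq_iff_dvd.mpr (Int.eight_dvd_sq_sub_one_of_odd hx)).symm
    calc x ^ 5 = (x ^ 2) ^ 2 * x := by ring
      _ ≡ 1 ^ 2 * x [ZMOD 8] := (hx2.pow 2).mul_right x
      _ = x := by ring
  have ha := Int.eight_dvd_sq_sub_one_of_odd (odd_of_two_mul_pow_five_sub_eq_sq hc habc)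
  have hmod : (2 * b ^ 5 - c ^ 5) % 8 = (2 * b - c) % 8 := ((hpow hb).mul_left 2).sub (hpow hc)
  rw [← habc] at ha
  obtain ⟨r, rfl⟩ := hb
  lia

theorem exists_eq_two_pow_mul_odd {g : ℤ} (hg : 8 ∣ g) (hg0 : g ≠ 0) :
    ∃ (n : ℕ) (o : ℤ), Odd o ∧ g = 2 ^ (n + 3) * o := by
  obtain ⟨r, rfl⟩ := hg
  obtain ⟨o, ho, ho'⟩ := (Int.finiteMultiplicity_iff.mpr
    ⟨by decide, right_ne_zero_of_mul hg0⟩ : FiniteMultiplicity 2 r).exists_eq_pow_mul_and_not_dvd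
  refine ⟨multiplicity 2 r, o, by rwa [← Int.not_even_iff_odd, even_iff_two_dvd], ?_⟩
  nth_rw 1 [ho]
  ring

theorem intCast_ne_zero_of_odd (R : Type*) [AddGroupWithOne R] [CharZero R] {x : ℤ} (hx : Odd x) :
    (x : R) ≠ 0 := by
  rw [Int.cast_ne_zero]
  rintro rfl
  exact absurd hx (by decide)

end Integers

section QuarticPoint

theorem fifthRoot_mul_sub_mul_eq {A : Type*} [CommRing A] {θ : A} (hθ : θ ^ 5 = 2) (b c : A) :
    (θ * b - c) * (θ ^ 4 * b ^ 4 + θ ^ 3 * b ^ 3 * c + θ ^ 2 * b ^ 2 * c ^ 2 + θ * b * c ^ 3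
      + c ^ 4) = 2 * b ^ 5 - c ^ 5 := by
  linear_combination b ^ 5 * hθ

theorem exists_sq_eq_quartic {K : Type*} [Field K] {θ a b c s : K} (hθ : θ ^ 5 = 2) (ha : a ≠ 0)
    (hc : c ≠ 0) (habc : 2 * b ^ 5 - c ^ 5 = a ^ 2) (hs : (θ - 1) * (θ * b - c) = s ^ 2) :
    ∃ V, V ^ 2 =
      (θ - 1) * ((θ * b / c) ^ 4 + (θ * b / c) ^ 3 + (θ * b / c) ^ 2 + θ * b / c + 1) := by
  have hfactor := (fifthRoot_mul_sub_mul_eq hθ b c).trans habc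
  have hs0 : s ≠ 0 := by
    have hlin : θ * b - c ≠ 0 := left_ne_zero_of_mul (hfactor ▸ pow_ne_zero 2 ha)
    refine (pow_ne_zero_iff two_ne_zero).mp (hs ▸ mul_ne_zero ?_ hlin)
    exact (isUnit_fifthRoot_sub_one hθ).ne_zero
  refine ⟨a * (θ - 1) / (s * c ^ 2), ?_⟩
  rw [div_pow, div_eq_iff (by positivity), mul_pow, mul_pow, ← hs, ← hfactor]
  field_simp

end QuarticPoint

section LocalConditions

namespace IsDyadic

variable {K : Type*} [Field K] {R : ValuationSubring K} {τ : R} (h : IsDyadic R τ 5)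

include h

theorem exists_base_point_neg_third : ∃ i V₀ v : R, 3 * i = 1 ∧
    V₀ ^ 2 = (τ - 1) * ((-τ * i) ^ 4 + (-τ * i) ^ 3 + (-τ * i) ^ 2 + -τ * i + 1) ∧
      V₀ ^ 2 = 1 + τ ^ 11 * v := by
  obtain ⟨p, hp⟩ := h.dvd_two
  obtain ⟨i, hi⟩ : ∃ i : R, 3 * i = 1 := by
    refine (?_ : IsUnit _).exists_right_inv
    convert h.isUnit_one_add_mul p using 1
    linear_combination hp
  have h5 := h.pow_eq_two
  refine ⟨i, (1 + 2 * τ + 4 * τ ^ 2 - 6 * τ ^ 3 + 2 * τ ^ 4) * i ^ 2,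
    (27 - 9 * τ + 3 * τ ^ 2 - τ ^ 3 - 20 * τ ^ 4) * i ^ 4, hi, ?_, ?_⟩
  · linear_combination i ^ 4 * (-41 + 52 * τ - 24 * τ ^ 2 + 4 * τ ^ 3) * h5 +
      (τ - 1) * ((3 * i + 1) * (9 * i ^ 2 + 1) - τ * i * (9 * i ^ 2 + 3 * i + 1)
        + τ ^ 2 * i ^ 2 * (3 * i + 1) - τ ^ 3 * i ^ 3) * hi
  · linear_combination i ^ 4 * (40 - 2 * τ - 6 * τ ^ 2 - 2 * τ ^ 3 + 2 * τ ^ 4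
      + 40 * τ ^ 5 - 27 * τ ^ 6 + 9 * τ ^ 7 - 3 * τ ^ 8 + τ ^ 9 + 20 * τ ^ 10) * h5 +
      (3 * i + 1) * (9 * i ^ 2 + 1) * hi

theorem emod_eq_one_and_isSquare {b c : ℤ}
    (hgen : IsProductModSquares (fiveUnits (τ : K)) (τ * b - c))
    (hmod : (b % 4 = 3 ∧ c % 8 = 5) ∨ (b % 4 = 1 ∧ c % 8 = 1)) :
    b % 4 = 1 ∧ c % 8 = 1 ∧ IsSquare ((τ - 1) * (τ * b - c) : K) := by
  have hgen' : IsProductModSquares (fiveUnits (τ : K)) ((τ - 1) * (τ * b - c)) := by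
    refine .mul ⟨![1, 0, 0, 0], 1, one_ne_zero, ?_⟩ hgen
    simp [fiveUnits, Fin.prod_univ_four]
  rcases hmod with ⟨hb, hc⟩ | ⟨hb, hc⟩
  · obtain ⟨k, rfl⟩ : ∃ k, c = 5 + 8 * k := ⟨c / 8, by lia⟩
    obtain ⟨l, rfl⟩ : ∃ l, b = 3 + 4 * l := ⟨b / 4, by lia⟩
    have hdef := h.hasDefect_seven (k : R) (l : R)
    rcases hgen'.isSquare_or_exists_hasDefect fiveUnitsDefect_injective h.hasDefect_fiveUnits with
      hsq | ⟨i, hi⟩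
    · exact absurd hsq (by simpa using hdef.not_isSquare)
    · push_cast at hi hdef
      have hne : ∀ i, fiveUnitsDefect i ≠ 7 := by decide
      exact absurd (hi.unique hdef) (hne i)
  · refine ⟨hb, hc, h.isSquare_of_isSquareMod_eleven hgen' ?_⟩
    obtain ⟨k, rfl⟩ : ∃ k, c = 1 + 8 * k := ⟨c / 8, by lia⟩
    obtain ⟨l, rfl⟩ : ∃ l, b = 1 + 4 * l := ⟨b / 4, by lia⟩
    simpa using h.isSquareMod_sub_one_mul (k : R) (l : R)

end IsDyadic

end LocalConditions

section MainArgument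

variable {K : Type*} [Field K] [NumberField K] {θ : 𝓞 K}

theorem isProductModSquares_fifthRoot_mul_sub (hK : finrank ℚ K = 5) (hθ : θ ^ 5 = 2) {a b c : ℤ}
    (hbc : IsCoprime b c) (hc : Odd c) (habc : 2 * b ^ 5 - c ^ 5 = a ^ 2) :
    IsProductModSquares (fiveUnits (θ : K)) (θ * b - c) := by
  have habc' : (2 * b ^ 5 - c ^ 5 : 𝓞 K) = a ^ 2 := by exact_mod_cast congrArg Int.cast habc
  have ha := intCast_ne_zero_of_odd (𝓞 K) (odd_of_two_mul_pow_five_sub_eq_sq hc habc)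
  have hfactor := (fifthRoot_mul_sub_mul_eq hθ (b : 𝓞 K) c).trans habc'
  have hm : (θ * b - c : 𝓞 K) ≠ 0 := left_ne_zero_of_mul (hfactor ▸ pow_ne_zero 2 ha)
  suffices h : IsProductModSquares (fiveUnits (θ : K)) (θ * b - c : 𝓞 K) by simpa using h
  refine isProductModSquares_of_mul_eq_sq hK hθ hm hfactor fun p hp hpm hpq => ?_
  have hp5c : p ∣ 5 * (c : 𝓞 K) ^ 4 := by
    convert hpq.sub (hpm.mul_right (θ ^ 3 * b ^ 3 + 2 * θ ^ 2 * b ^ 2 * c + 3 * θ * b * c ^ 2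
      + 4 * c ^ 3)) using 1
    ring
  refine (hp.dvd_or_dvd hp5c).resolve_right fun hpc4 => ?_
  have hpc := hp.dvd_of_dvd_pow hpc4
  have hpθb : p ∣ θ * b := by simpa using hpm.add hpc
  rcases hp.dvd_or_dvd hpθb with hpθ | hpb
  · obtain ⟨k, rfl⟩ := hc
    have hp2 : p ∣ 2 := hθ ▸ hpθ.trans (dvd_pow_self θ (by norm_num))
    push_cast at hpc
    exact hp.not_isUnit (isUnit_of_dvd_one ((dvd_add_right (hp2.mul_right _)).mp hpc))
  · exact hp.not_isUnit ((hbc.map (Int.castRingHom (𝓞 K))).isUnit_of_dvd' hpb hpc)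

namespace IsDyadic

variable {R : ValuationSubring K} {τ : R} (h : IsDyadic R τ 5)

include h

theorem eq_zero_of_sq_eq_quartic (hK : finrank ℚ K = 5) (hθ : θ ^ 5 = 2) (hτ : (τ : K) = θ)
    {t₀ V₀ v : R} {t V : K} {g k : ℤ}
    (hV₀ : V₀ ^ 2 = (τ - 1) * (t₀ ^ 4 + t₀ ^ 3 + t₀ ^ 2 + t₀ + 1))
    (hv : V₀ ^ 2 = 1 + τ ^ 11 * v)
    (hV : V ^ 2 = (τ - 1) * (t ^ 4 + t ^ 3 + t ^ 2 + t + 1))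
    (hk : Odd k) (hg : 8 ∣ g) (ht : (t - t₀) * k = τ * g) : g = 0 := by
  by_contra hg0
  obtain ⟨n, o, ho, rfl⟩ := exists_eq_two_pow_mul_odd hg hg0
  obtain ⟨w, w', hw, hw'⟩ := h.exists_eq_div_and_sq_eq ho hk
  obtain rfl : t = (t₀ + τ ^ (5 * (n + 3) + 1) * w : R) := by
    refine mul_right_cancel₀ (intCast_ne_zero_of_odd K hk) ?_
    have hwK : (w * k : K) = o := by exact_mod_cast congrArg Subtype.val hw
    push_cast at ht ⊢
    rw [← h.coe_pow_eq_two] at ht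
    linear_combination ht - τ ^ (5 * (n + 3) + 1) * hwK
  obtain ⟨x, y, hy, c, hx⟩ := h.exists_level_point n (V := V) hV₀ hv hw' rfl (by
    push_cast at hV ⊢; exact hV)
  push_cast at hy
  exact h.not_exists_point hK hθ hτ (n + 1) hy hx

end IsDyadic

theorem eq_or_eq_neg_three_mul_of_two_mul_pow_five_sub_eq_sq (hK : finrank ℚ K = 5)
    (hθ : θ ^ 5 = 2) {a b c : ℤ} (hbc : IsCoprime b c) (hb : Odd b) (hc : Odd c)
    (habc : 2 * b ^ 5 - c ^ 5 = a ^ 2) : b = c ∨ c = -3 * b := by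
  obtain ⟨R, τ, hτ, h⟩ := exists_isDyadic_of_pow_five_eq_two hK hθ
  obtain ⟨hb4, hc8, s, hs⟩ := h.emod_eq_one_and_isSquare
    (hτ ▸ isProductModSquares_fifthRoot_mul_sub hK hθ hbc hc habc)
    (emod_cases_of_two_mul_pow_five_sub_eq_sq hb hc habc)
  have ha0 := intCast_ne_zero_of_odd K (odd_of_two_mul_pow_five_sub_eq_sq hc habc)
  have hc0 := intCast_ne_zero_of_odd K hc
  obtain ⟨V, hV⟩ := exists_sq_eq_quartic h.coe_pow_eq_two ha0 hc0
    (by exact_mod_cast congrArg Int.cast habc) (hs.trans (sq s).symm)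
  rcases (by lia : b % 8 = 1 ∨ b % 8 = 5) with hb8 | hb8
  · have hbc0 : b - c = 0 := h.eq_zero_of_sq_eq_quartic hK hθ hτ (t₀ := τ) (V₀ := 1) (v := 0)
      (by linear_combination -h.pow_eq_two) (by simp) hV hc (by lia) (by push_cast; field_simp)
    exact .inl (sub_eq_zero.mp hbc0)
  · obtain ⟨i, V₀, v, hi, hV₀, hv⟩ := h.exists_base_point_neg_third
    have hiK : (3 * i : K) = 1 := by exact_mod_cast congrArg Subtype.val hi
    have hbc0 : 3 * b + c = 0 := h.eq_zero_of_sq_eq_quartic hK hθ hτ hV₀ hv hV (k := 3 * c)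
      ((by decide : Odd (3 : ℤ)).mul hc) (by lia) (by
        push_cast
        field_simp
        linear_combination (c * τ : K) * hiK)
    exact .inr (by linear_combination hbc0)

end MainArgument

section PureField

theorem exists_numberField_pow_five_eq_two :
    ∃ (K : Type) (_ : Field K) (_ : NumberField K) (θ : 𝓞 K), finrank ℚ K = 5 ∧ θ ^ 5 = 2 := by
  have hirr : Irreducible (X ^ 5 - C 2 : ℚ[X]) :=
    X_pow_sub_C_irreducible_of_prime Nat.prime_five (by simpa using ratCast_pow_five_ne_two)
  have : Fact (Irreducible (X ^ 5 - C 2 : ℚ[X])) := ⟨hirr⟩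
  let pb := AdjoinRoot.powerBasis hirr.ne_zero
  have : FiniteDimensional ℚ (AdjoinRoot (X ^ 5 - C 2 : ℚ[X])) := pb.finite
  have : CharZero (AdjoinRoot (X ^ 5 - C 2 : ℚ[X])) := algebraRat.charZero _
  have hroot : (AdjoinRoot.root (X ^ 5 - C 2 : ℚ[X])) ^ 5 = 2 := by
    have heval := AdjoinRoot.eval₂_root (X ^ 5 - C 2 : ℚ[X])
    simpa [sub_eq_zero] using heval
  have hint : IsIntegral ℤ (AdjoinRoot.root (X ^ 5 - C 2 : ℚ[X])) :=
    .of_pow (n := 5) (by norm_num) (by rw [hroot]; exact isIntegral_algebraMap (x := (2 : ℤ)))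
  refine ⟨AdjoinRoot (X ^ 5 - C 2 : ℚ[X]), inferInstance, {}, ⟨_, hint⟩, ?_, Subtype.ext hroot⟩
  rw [pb.finrank, AdjoinRoot.powerBasis_dim, natDegree_X_pow_sub_C]

end PureField

/-- If `b, c` are coprime odd integers and `a` is an integer with `2b⁵ - c⁵ = a²`,
then `b = c = 1` (and hence `a = ±1`). -/
theorem two_b5_sub_c5_sq (a b c : ℤ) (hgcd : Int.gcd b c = 1)
    (hb : Odd b) (hc : Odd c) (heq : 2 * b ^ 5 - c ^ 5 = a ^ 2) :
    b = 1 ∧ c = 1 ∧ (a = 1 ∨ a = -1) := by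
  obtain ⟨K, _, _, θ, hK, hθ⟩ := exists_numberField_pow_five_eq_two
  have hbc : IsCoprime b c := Int.isCoprime_iff_gcd_eq_one.mpr hgcd
  rcases eq_or_eq_neg_three_mul_of_two_mul_pow_five_sub_eq_sq hK hθ hbc hb hc heq with rfl | rfl
  · rcases Int.isUnit_iff.mp (isCoprime_self.mp hbc) with rfl | rfl
    · exact ⟨rfl, rfl, sq_eq_one_iff.mp (by lia)⟩
    · nlinarith
  · have hunit : IsUnit b := hbc.isUnit_of_dvd' dvd_rfl (dvd_mul_left b _)
    have ha := Int.eight_dvd_sq_sub_one_of_odd (odd_of_two_mul_pow_five_sub_eq_sq hc heq)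
    rcases Int.isUnit_iff.mp hunit with rfl | rfl <;> lia
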